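/- Let r be a positive integer, let ψ be the distribution degenerate at r, let 𝒢=(V,E,λ) be a sample from Γ_{[n]}(ψ), and let 𝒢^O be its order discretization. Then for any constant β>0, with probability tending to 1 as n→∞, Double(𝒢^O) ≤ (1+β)·n·log n. -/

import Mathlib

open MeasureTheory ProbabilityTheory Filter Set
open scoped ENNReal NNReal Topology

noncomputable section

namespace RTG

/-- A temporal graph on vertex type `V`, given by the finite set of real time labels
attached to each potential edge (unordered pair of vertices). -/
abbrev TGraph (V : Type*) := Sym2 V → Finset ℝ

/-- `P` is a strict partial order supported on the set `s`. -/
def StrictPartialOrderOn {α : Type*} (s : Set α) (P : α → α → Prop) : Prop :=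
  (∀ a, ¬ P a a) ∧ (∀ a b c, P a b → P b c → P a c) ∧ ∀ a b, P a b → a ∈ s ∧ b ∈ s

/-- The temporal graph `Λ` contains `(H, P)` as a `δ`-temporal motif. -/
def Contains {VH V : Type*} (H : SimpleGraph VH) (P : Sym2 VH → Sym2 VH → Prop)
    (Λ : TGraph V) (δ : ℝ) : Prop :=
  ∃ Φ : VH → V, Function.Injective Φ ∧
    ∃ lab : Sym2 VH → ℝ,
      (∀ e ∈ H.edgeSet, lab e ∈ Λ (Sym2.map Φ e)) ∧
      (∀ e f, P e f → lab e < lab f) ∧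
      (∀ e ∈ H.edgeSet, ∀ f ∈ H.edgeSet, lab e - lab f < δ)

/-- The sparsity `ρ_H` of a graph `H`: the minimum over subgraphs with at least two
edges of `|V_I| / (|E_I| - 1)`. -/
def sparsity {VH : Type*} (H : SimpleGraph VH) : ℝ :=
  sInf {x : ℝ | ∃ I : H.Subgraph, 2 ≤ I.edgeSet.ncard ∧
    x = (I.verts.ncard : ℝ) / ((I.edgeSet.ncard : ℝ) - 1)}

/-- The space of label data on a single edge: a number `k` of labels together with the
tuple of `k` label values (indexed in order of sampling). -/
abbrev LabelSpace := Σ k : ℕ, Fin k → ℝ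

/-- The uniform distribution on `(0, 1]`. -/
def unif01 : Measure ℝ := volume.restrict (Set.Ioc 0 1)

/-- The uniform distribution on `{1, …, T}` (as a measure on `ℝ`). -/
def unifDisc (T : ℕ) : Measure ℝ :=
  (T : ℝ≥0∞)⁻¹ • ∑ k ∈ Finset.Icc 1 T, Measure.dirac (k : ℝ)

/-- The distribution of the label data of a single edge: the number of labels is drawn
according to `ψ` and, independently, each label value is drawn according to `ν`. -/
def edgeMeasure (ν : Measure ℝ) (ψ : Measure ℕ) : Measure LabelSpace :=
  Measure.sum fun k => ψ {k} • (Measure.pi fun _ : Fin k => ν).map (Sigma.mk k)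

/-- The doubly random temporal graph model on vertex set `V` with label value
distribution `ν` and label multiplicity distribution `ψ`: all edges receive independent
identically distributed label data. -/
def model (V : Type*) [Fintype V] [DecidableEq V] (ν : Measure ℝ) (ψ : Measure ℕ) :
    Measure (Sym2 V → LabelSpace) :=
  Measure.pi fun _ : Sym2 V => edgeMeasure ν ψ

/-- The continuous doubly random temporal graph `Γ_V(ψ)`. -/
abbrev contModel (V : Type*) [Fintype V] [DecidableEq V] (ψ : Measure ℕ) :
    Measure (Sym2 V → LabelSpace) := model V unif01 ψ

/-- The discrete doubly random temporal graph `Γ_V(ψ, T)`. -/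
abbrev discModel (V : Type*) [Fintype V] [DecidableEq V] (ψ : Measure ℕ) (T : ℕ) :
    Measure (Sym2 V → LabelSpace) := model V (unifDisc T) ψ

/-- The temporal graph determined by a sample `ω` of the model: each non-loop edge
carries the sampled set of labels. -/
def toTGraph {V : Type*} [DecidableEq V] (ω : Sym2 V → LabelSpace) : TGraph V :=
  fun e => if e.IsDiag then ∅ else Finset.image (ω e).2 Finset.univ

/-- The `T`-discretization of a temporal graph: each label `l` is replaced by `⌈T·l⌉`. -/
def discretize {V : Type*} (T : ℕ) (Λ : TGraph V) : TGraph V :=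
  fun e => (Λ e).image fun l => ((⌈(T : ℝ) * l⌉ : ℤ) : ℝ)

/-- `ψ` is a label multiplicity distribution: a probability distribution on `ℕ` with
positive finite mean and finite second moment. -/
def IsLMD (ψ : Measure ℕ) : Prop :=
  IsProbabilityMeasure ψ ∧ Integrable (fun k : ℕ => (k : ℝ)) ψ ∧
    Integrable (fun k : ℕ => (k : ℝ) ^ 2) ψ ∧ 0 < ∫ k, (k : ℝ) ∂ψ

/-- The mean `r` of a label multiplicity distribution. -/
def lmdMean (ψ : Measure ℕ) : ℝ := ∫ k, (k : ℝ) ∂ψ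

/-- The second moment `r₂` of a label multiplicity distribution. -/
def lmdSq (ψ : Measure ℕ) : ℝ := ∫ k, (k : ℝ) ^ 2 ∂ψ

/-- `q = P[Q > 0]` for a label multiplicity distribution. -/
def lmdPos (ψ : Measure ℕ) : ℝ := (ψ {k | 0 < k}).toReal

/-- `v` is reachable from the set `S` by time `t` in the temporal graph `Λ`. -/
def ReachBy {V : Type*} (Λ : TGraph V) (S : Set V) (t : ℝ) (v : V) : Prop :=
  v ∈ S ∨ ∃ (k : ℕ) (f : ℕ → V) (ts : ℕ → ℝ), 0 < k ∧ f 0 ∈ S ∧ f k = v ∧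
    (∀ i < k, ts i ∈ Λ s(f i, f (i + 1))) ∧
    (∀ i j, i < j → j < k → ts i < ts j) ∧ ts (k - 1) ≤ t

/-- The reachability ball `B_Λ(S, t)`. -/
def ball {V : Type*} (Λ : TGraph V) (S : Set V) (t : ℝ) : Set V := {v | ReachBy Λ S t v}

/-- The doubling time of the set `S` in `Λ` (with value `∞` if the reachability ball
never doubles in size). -/
def doubleTime {V : Type*} (Λ : TGraph V) (S : Set V) : ℝ≥0∞ :=
  ⨅ (t : ℝ) (_ : 0 ≤ t ∧ 2 * S.ncard ≤ (ball Λ S t).ncard), ENNReal.ofReal t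

/-- The doubling time of the temporal graph `Λ`: the maximum doubling time over all
nonempty vertex sets of size at most half the number of vertices. -/
def doubleAll {V : Type*} [Fintype V] (Λ : TGraph V) : ℝ≥0∞ :=
  ⨆ (S : Set V) (_ : S.Nonempty ∧ 2 * S.ncard ≤ Fintype.card V), doubleTime Λ S

/-- `Double⁻`: the maximum doubling time over nonempty sets of size at most `n/4`. -/
def doubleSmall {V : Type*} [Fintype V] (Λ : TGraph V) : ℝ≥0∞ :=
  ⨆ (S : Set V) (_ : S.Nonempty ∧ 4 * S.ncard ≤ Fintype.card V), doubleTime Λ S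

/-- `Double⁺`: the maximum doubling time over sets of size in `(n/4, n/2]`. -/
def doubleLarge {V : Type*} [Fintype V] (Λ : TGraph V) : ℝ≥0∞ :=
  ⨆ (S : Set V) (_ : Fintype.card V < 4 * S.ncard ∧ 2 * S.ncard ≤ Fintype.card V),
    doubleTime Λ S

/-- The partial reversal `ℛ(Λ, t)`: every label `l < t` is replaced by `t - l`. -/
def reverse {V : Type*} (Λ : TGraph V) (t : ℝ) : TGraph V :=
  fun e => (Λ e).image fun l => if l < t then t - l else l

/-- The rank of a time `x` among all the labels of the sample `ω`: the number of labels
(on genuine, non-loop, edges) that are at most `x`. -/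
def rank {V : Type*} [Fintype V] [DecidableEq V] (ω : Sym2 V → LabelSpace) (x : ℝ) : ℕ :=
  ∑ e ∈ Finset.univ.filter (fun e : Sym2 V => ¬ e.IsDiag),
    Nat.card {i : Fin (ω e).1 // (ω e).2 i ≤ x}

/-- The order discretization `𝒢^O` of the sample `ω`: each label is replaced by its rank
among all labels. -/
def orderDisc {V : Type*} [Fintype V] [DecidableEq V] (ω : Sym2 V → LabelSpace) :
    TGraph V :=
  fun e => if e.IsDiag then ∅
    else Finset.image (fun i => (rank ω ((ω e).2 i) : ℝ)) Finset.univ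

/-!
A set of `a` vertices among `n` has `a (n - a)` edges to its complement. Watch the labels up to
time `t = 2 (1 + β / 2) log n / (r n)`, cut into many short slots of length `h`. Every edge has a
label in a given slot with probability about `r h`, and edges that have avoided some slots are
only more likely to have a label in the others. A spreading set of size `l` thus gains a vertex in
each slot with probability about `r h l (n - l)`, whatever its history, and a Chernoff bound for
its time to grow from size `a` to size `b` gives a failure probability of at most a moderate
weight times `exp (- r t a (n - a))`. This beats the `n.choose a` possible starting sets, so all
sets of at most `n / 3` vertices double by time `t`. If a larger set `S` reached fewer than
`2 |S|` vertices, then some `n - 2 |S| + 1` vertices would be missed; spreading from these through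
the slots in reverse order fills more than `n - |S|` vertices and hence meets `S`, a
contradiction.

Ranks preserve the order of the labels. About `r t n ^ 2 / 2 = (1 + β / 2) n log n` labels occur by
time `t`, so by another Chernoff bound at most `(1 + β) n log n` of them do.
-/

section Spread

variable {V : Type*}

/-- The set infected after `i` steps when the infection starts from `S` and in step `j` crosses
every edge of `E j` that touches an infected vertex. -/
def spread (E : ℕ → Set (Sym2 V)) (S : Set V) : ℕ → Set V
  | 0 => S
  | i + 1 => spread E S i ∪ {y | ∃ x ∈ spread E S i, s(x, y) ∈ E i}

lemma mem_spread_succ {E : ℕ → Set (Sym2 V)} {S : Set V} {i : ℕ} {y : V} :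
    y ∈ spread E S (i + 1) ↔ y ∈ spread E S i ∨ ∃ x ∈ spread E S i, s(x, y) ∈ E i :=
  Iff.rfl

lemma spread_monotone (E : ℕ → Set (Sym2 V)) (S : Set V) : Monotone (spread E S) :=
  monotone_nat_of_le_succ fun _ => Set.subset_union_left

/-- The edges between `A` and its complement. -/
def cut (A : Set V) : Set (Sym2 V) := (fun p : V × V => s(p.1, p.2)) '' (A ×ˢ Aᶜ)

lemma mem_cut {A : Set V} {e : Sym2 V} : e ∈ cut A ↔ ∃ x ∈ A, ∃ y ∉ A, s(x, y) = e := by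
  simp [cut, and_assoc]

lemma mk_mem_cut {A : Set V} {x y : V} (hx : x ∈ A) (hy : y ∉ A) : s(x, y) ∈ cut A :=
  mem_cut.2 ⟨x, hx, y, hy, rfl⟩

lemma mk_notMem_cut {A : Set V} {x y : V} (hx : x ∈ A) (hy : y ∈ A) : s(x, y) ∉ cut A := by
  simp only [mem_cut, Sym2.eq_iff]
  rintro ⟨u, -, v, hv, ⟨-, rfl⟩ | ⟨-, rfl⟩⟩ <;> contradiction

lemma ncard_cut [Finite V] (A : Set V) :
    (cut A).ncard = A.ncard * (Nat.card V - A.ncard) := by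
  have inj : InjOn (fun p : V × V => s(p.1, p.2)) (A ×ˢ Aᶜ) := by
    rintro ⟨x, y⟩ ⟨hx, hy⟩ ⟨x', y'⟩ ⟨hx', hy'⟩ h
    rcases Sym2.eq_iff.1 h with ⟨rfl, rfl⟩ | ⟨rfl, rfl⟩
    · rfl
    · exact absurd hx hy'
  rw [cut, inj.ncard_image, Set.ncard_prod, Set.ncard_compl]

/-- The part of the condition `∀ j ≤ i, spread E S j = A j` that concerns the edges inside
`A i`. -/
def SpreadsInside (A : ℕ → Set V) (i : ℕ) (E : ℕ → Set (Sym2 V)) : Prop :=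
  ∀ j < i, ∀ y ∈ A i, y ∈ A (j + 1) ↔ y ∈ A j ∨ ∃ x ∈ A j, s(x, y) ∈ E j

lemma SpreadsInside.congr {A : ℕ → Set V} (hA : Monotone A) {i : ℕ} {E E' : ℕ → Set (Sym2 V)}
    (h : ∀ e ∉ cut (A i), ∀ j, e ∈ E j ↔ e ∈ E' j) (hE : SpreadsInside A i E) :
    SpreadsInside A i E' := by
  intro j hj y hy
  rw [hE j hj y hy]
  exact or_congr_right <| exists_congr fun x => and_congr_right fun hx =>
    h _ (mk_notMem_cut (hA hj.le hx) hy) j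

lemma forall_spread_eq_iff {A : ℕ → Set V} (hA : Monotone A) (E : ℕ → Set (Sym2 V)) (i : ℕ) :
    (∀ j ≤ i, spread E (A 0) j = A j) ↔
      SpreadsInside A i E ∧ ∀ e ∈ cut (A i), ∀ j < i, (∃ x ∈ e, x ∈ A j) → e ∉ E j := by
  constructor
  · intro h
    have step : ∀ j < i, ∀ y, y ∈ A (j + 1) ↔ y ∈ A j ∨ ∃ x ∈ A j, s(x, y) ∈ E j := by
      intro j hj y
      rw [← h j hj.le, ← h (j + 1) hj, mem_spread_succ]
    refine ⟨fun j hj y _ => step j hj y, fun e he j hj hx heE => ?_⟩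
    obtain ⟨x, -, y, hy, rfl⟩ := mem_cut.1 he
    obtain ⟨z, hz, hzA⟩ := hx
    rcases Sym2.mem_iff.1 hz with rfl | rfl
    · exact hy (hA (Nat.succ_le_of_lt hj) ((step j hj y).2 (.inr ⟨z, hzA, heE⟩)))
    · exact hy (hA hj.le hzA)
  · rintro ⟨inside, box⟩ j hj
    induction j with
    | zero => rfl
    | succ j ih =>
      ext y
      rw [mem_spread_succ, ih (by omega)]
      by_cases hy : y ∈ A i
      · exact (inside j hj y hy).symm
      · refine iff_of_false ?_ fun h => hy (hA hj h)
        rintro (h | ⟨x, hx, hxy⟩)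
        · exact hy (hA (Nat.le_of_succ_le hj) h)
        · exact box _ (mk_mem_cut (hA (Nat.le_of_succ_le hj) hx) hy) j hj
            ⟨x, Sym2.mem_mk_left x y, hx⟩ hxy

lemma disjoint_cut_of_spread_succ_eq {E : ℕ → Set (Sym2 V)} {S : Set V} {i : ℕ}
    (h : spread E S (i + 1) = spread E S i) : Disjoint (cut (spread E S i)) (E i) := by
  refine Set.disjoint_left.2 fun e he heE => ?_
  obtain ⟨x, hx, y, hy, rfl⟩ := mem_cut.1 he
  exact hy (h ▸ mem_spread_succ.2 (.inr ⟨x, hx, heE⟩))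

end Spread

section Independence

lemma measureReal_pi_inter_of_dependsOn {ι : Type*} [Fintype ι] {X : ι → Type*}
    [∀ i, MeasurableSpace (X i)] (ν : ∀ i, Measure (X i)) [∀ i, IsProbabilityMeasure (ν i)]
    {C : Finset ι} {E : Set (∀ i, X i)} (hE : DependsOn (· ∈ E) (C : Set ι)ᶜ)
    (Q : ∀ i, Set (X i)) :
    (Measure.pi ν).real (E ∩ {ω | ∀ i ∈ C, ω i ∈ Q i}) =
      (Measure.pi ν).real E * ∏ i ∈ C, (ν i).real (Q i) := by
  classical
  have mp := measurePreserving_piEquivPiSubtypeProd ν (· ∈ C)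
  set φ := MeasurableEquiv.piEquivPiSubtypeProd X (· ∈ C) with hφ
  have hE' : E = φ ⁻¹' (Set.univ ×ˢ {u | ∃ ω ∈ E, ∀ i : {i // i ∉ C}, ω i = u i}) := by
    ext ω
    simp only [Set.mem_preimage, Set.mem_prod, Set.mem_univ, true_and]
    exact ⟨fun h => ⟨ω, h, fun i => rfl⟩,
      fun ⟨ω', h, hω'⟩ => (hE fun i hi => hω' ⟨i, hi⟩).mp h⟩
  have hQ : {ω : ∀ i, X i | ∀ i ∈ C, ω i ∈ Q i} =
      φ ⁻¹' ((Set.univ.pi fun i : {i // i ∈ C} => Q i) ×ˢ Set.univ) := by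
    ext ω
    simp [hφ, MeasurableEquiv.piEquivPiSubtypeProd, Equiv.piEquivPiSubtypeProd]
  rw [hE', hQ, ← Set.preimage_inter, Set.prod_inter_prod, Set.univ_inter, Set.inter_univ]
  simp only [measureReal_def, mp.measure_preimage_equiv]
  simp only [← measureReal_def, measureReal_prod_prod, probReal_univ, one_mul]
  simp only [measureReal_def, Measure.pi_pi, ENNReal.toReal_prod]
  rw [mul_comm]
  exact congrArg _ (Finset.prod_subtype C (fun _ => Iff.rfl) fun i => (ν i (Q i)).toReal).symm

lemma measureReal_le_of_forall_fiber {Ω β : Type*} [MeasurableSpace Ω] {μ : Measure Ω}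
    [IsFiniteMeasure μ] [Finite β] [MeasurableSpace β] [MeasurableSingletonClass β] {H : Ω → β}
    (hH : Measurable H) {T U : Set Ω} {c : ℝ}
    (h : ∀ b, μ.real (T ∩ H ⁻¹' {b}) ≤ c * μ.real (U ∩ H ⁻¹' {b})) :
    μ.real T ≤ c * μ.real U := by
  have := Fintype.ofFinite β
  have total (s : Set Ω) : μ.real s = ∑ b, μ.real (s ∩ H ⁻¹' {b}) := by
    have key := sum_measureReal_preimage_singleton (μ := μ.restrict s) (f := H) Finset.univ
      fun b _ => hH (measurableSet_singleton b)
    simp_rw [measureReal_restrict_apply (hH (measurableSet_singleton _))] at key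
    simpa [Set.inter_comm] using key.symm
  rw [total T, total U, Finset.mul_sum]
  exact Finset.sum_le_sum fun b _ => h b

end Independence

section RandomSpread

variable {V α : Type*}

/-- The edges that are crossed in step `i` when the state `ω e` of an edge `e` lets the infection
through in step `i` if and only if it belongs to `Act i`. -/
def active (Act : ℕ → Set α) (ω : Sym2 V → α) (i : ℕ) : Set (Sym2 V) := {e | ω e ∈ Act i}

variable [MeasurableSpace α]

lemma measurable_spread_active [Countable V] {Act : ℕ → Set α}
    (hAct : ∀ i, MeasurableSet (Act i)) (S : Set V) (i : ℕ) :
    Measurable fun ω : Sym2 V → α => spread (active Act ω) S i := by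
  refine measurable_set_iff.2 fun y => ?_
  induction i generalizing y with
  | zero => exact measurable_const
  | succ i ih =>
    have crossed (e : Sym2 V) : Measurable fun ω : Sym2 V → α => e ∈ active Act ω i :=
      measurableSet_setOfPred.1 (measurable_pi_apply e (hAct i))
    exact (ih y).or (Measurable.exists fun x => (ih x).and (crossed s(x, y)))

/-- Conditionally on avoiding any set of other steps among the first `M`, the state of an edge
avoids step `i < M` with probability at most `q`. -/
def AvoidProbLE (ν : Measure α) (Act : ℕ → Set α) (M : ℕ) (q : ℝ) : Prop :=
  ∀ J ⊆ Finset.range M, ∀ i < M, i ∉ J →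
    ν.real {a | ∀ j ∈ insert i J, a ∉ Act j} ≤ q * ν.real {a | ∀ j ∈ J, a ∉ Act j}

variable {ν : Measure α} [IsProbabilityMeasure ν] {Act : ℕ → Set α} {M : ℕ} {q : ℝ}

lemma AvoidProbLE.measureReal_pi_inter_le {ι : Type*} [Fintype ι] (hν : AvoidProbLE ν Act M q)
    {C : Finset ι} {E : Set (ι → α)} (hE : DependsOn (· ∈ E) (C : Set ι)ᶜ) {i : ℕ} (hi : i < M)
    {J : ι → Finset ℕ} (hJ : ∀ e, J e ⊆ Finset.range i) :
    (Measure.pi fun _ : ι => ν).real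
        (E ∩ {ω | ∀ e ∈ C, ω e ∈ {a | ∀ j ∈ insert i (J e), a ∉ Act j}}) ≤
      q ^ C.card * (Measure.pi fun _ : ι => ν).real
        (E ∩ {ω | ∀ e ∈ C, ω e ∈ {a | ∀ j ∈ J e, a ∉ Act j}}) := by
  rw [measureReal_pi_inter_of_dependsOn _ hE, measureReal_pi_inter_of_dependsOn _ hE]
  calc (Measure.pi fun _ : ι => ν).real E * ∏ e ∈ C, ν.real {a | ∀ j ∈ insert i (J e), a ∉ Act j}
      ≤ (Measure.pi fun _ : ι => ν).real E * ∏ e ∈ C, q * ν.real {a | ∀ j ∈ J e, a ∉ Act j} := by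
        gcongr with e
        exact hν _ ((hJ e).trans (Finset.range_subset_range.2 hi.le)) i hi
          fun h => Finset.notMem_range_self (hJ e h)
    _ = _ := by
        rw [Finset.prod_mul_distrib, Finset.prod_const]
        ring

variable [Fintype V]

/- Given the history up to time `i`, the edges of the cut of the infected set are only known to
have avoided some earlier steps, and they are independent of each other and of the edges inside
the infected set. -/
lemma measureReal_history_inter_stay_le (hν : AvoidProbLE ν Act M q) {i : ℕ}
    (hi : i < M) {A : ℕ → Set V} (hA : Monotone A) :
    (Measure.pi fun _ : Sym2 V => ν).real
        ({ω | spread (active Act ω) (A 0) (i + 1) = spread (active Act ω) (A 0) i} ∩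
          {ω | ∀ j ≤ i, spread (active Act ω) (A 0) j = A j}) ≤
      q ^ (cut (A i)).ncard * (Measure.pi fun _ : Sym2 V => ν).real
        {ω | ∀ j ≤ i, spread (active Act ω) (A 0) j = A j} := by
  classical
  set C := (cut (A i)).toFinset with hC
  have mem_C {e : Sym2 V} : e ∈ C ↔ e ∈ cut (A i) := Set.mem_toFinset
  let touched (e : Sym2 V) : Finset ℕ := {j ∈ Finset.range i | ∃ x ∈ e, x ∈ A j}
  let inside := {ω : Sym2 V → α | SpreadsInside A i (active Act ω)}
  have inside_dependsOn : DependsOn (· ∈ inside) (C : Set (Sym2 V))ᶜ := by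
    refine fun ω ω' h => propext ⟨SpreadsInside.congr hA ?_, SpreadsInside.congr hA ?_⟩ <;>
      intro e he j <;> simp [active, h e (by simpa [mem_C] using he)]
  have history_eq : {ω | ∀ j ≤ i, spread (active Act ω) (A 0) j = A j} =
      inside ∩ {ω | ∀ e ∈ C, ω e ∈ {a | ∀ j ∈ touched e, a ∉ Act j}} := by
    ext ω
    refine (forall_spread_eq_iff hA _ i).trans (and_congr_right' ?_)
    simp [touched, active, mem_C]
  rw [Set.ncard_eq_toFinset_card', ← hC, history_eq]
  refine (measureReal_mono fun ω hω => ?_).trans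
    (hν.measureReal_pi_inter_le inside_dependsOn hi fun e => Finset.filter_subset _ _)
  obtain ⟨hstay, hω⟩ := hω
  have hωi : spread (active Act ω) (A 0) i = A i := by
    rw [← history_eq] at hω
    exact hω i le_rfl
  have closed := disjoint_cut_of_spread_succ_eq hstay
  rw [hωi] at closed
  exact ⟨hω.1, fun e he => (Finset.forall_mem_insert _ _ _).2
    ⟨Set.disjoint_left.1 closed (mem_C.1 he), hω.2 e he⟩⟩

lemma measureReal_ncard_spread_stay_le (hAct : ∀ i, MeasurableSet (Act i))
    (hν : AvoidProbLE ν Act M q) (S : Set V) {i : ℕ} (hi : i < M) (l : ℕ) :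
    (Measure.pi fun _ : Sym2 V => ν).real
        {ω | (spread (active Act ω) S i).ncard = l ∧
          (spread (active Act ω) S (i + 1)).ncard = l} ≤
      q ^ (l * (Nat.card V - l)) * (Measure.pi fun _ : Sym2 V => ν).real
        {ω | (spread (active Act ω) S i).ncard = l} := by
  classical
  set μ := Measure.pi fun _ : Sym2 V => ν
  let H (ω : Sym2 V → α) (j : Fin (i + 1)) : Set V := spread (active Act ω) S j
  have hH : Measurable H := measurable_pi_lambda _ fun j => measurable_spread_active hAct S j
  refine measureReal_le_of_forall_fiber hH fun b => ?_
  by_cases hb : ∃ ω₀, H ω₀ = b ∧ (spread (active Act ω₀) S i).ncard = l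
  · obtain ⟨ω₀, rfl, hl⟩ := hb
    have fiber : H ⁻¹' {H ω₀} =
        {ω | ∀ j ≤ i, spread (active Act ω) S j = spread (active Act ω₀) S j} := by
      ext ω
      simp [H, funext_iff, Fin.forall_iff]
    have fiber_subset : H ⁻¹' {H ω₀} ⊆ {ω | (spread (active Act ω) S i).ncard = l} := by
      rw [fiber]
      exact fun ω hω => (congrArg _ (hω i le_rfl)).trans hl
    have stay : {ω | (spread (active Act ω) S i).ncard = l ∧
        (spread (active Act ω) S (i + 1)).ncard = l} ⊆
          {ω | spread (active Act ω) S (i + 1) = spread (active Act ω) S i} := fun ω hω =>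
      (Set.eq_of_subset_of_ncard_le (spread_monotone _ S i.le_succ) (hω.2.trans hω.1.symm).le).symm
    rw [Set.inter_eq_right.2 fiber_subset, ← hl, ← ncard_cut, fiber]
    exact (measureReal_mono (Set.inter_subset_inter_left _ (hl ▸ stay))).trans
      (measureReal_history_inter_stay_le hν hi (spread_monotone (active Act ω₀) S))
  · have empty : {ω | (spread (active Act ω) S i).ncard = l} ∩ H ⁻¹' {b} = ∅ :=
      Set.eq_empty_of_forall_notMem fun ω hω => hb ⟨ω, hω.2, hω.1⟩
    have empty' : {ω | (spread (active Act ω) S i).ncard = l ∧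
        (spread (active Act ω) S (i + 1)).ncard = l} ∩ H ⁻¹' {b} = ∅ :=
      Set.eq_empty_of_forall_notMem fun ω hω => hb ⟨ω, hω.2, hω.1.1⟩
    simp [empty, empty']

end RandomSpread

section MonotoneProcess

/-- The weight `∏ (1 - x l)⁻¹` of the levels `l < b` still to be left from level `j` on, or `0` once
level `b` is reached. Its expectation along a suitable process decreases geometrically in time. -/
def levelPotential (x : ℕ → ℝ) (b j : ℕ) : ℝ :=
  if j < b then ∏ l ∈ Finset.Ico j b, (1 - x l)⁻¹ else 0

variable {x : ℕ → ℝ} {a b : ℕ}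

lemma levelPotential_of_lt {j : ℕ} (hj : j < b) :
    levelPotential x b j = ∏ l ∈ Finset.Ico j b, (1 - x l)⁻¹ := if_pos hj

lemma levelPotential_of_le {j : ℕ} (hj : b ≤ j) : levelPotential x b j = 0 := if_neg hj.not_gt

lemma levelPotential_nonneg (hx1 : ∀ l ∈ Finset.Ico a b, x l < 1) {j : ℕ} (hj : a ≤ j) :
    0 ≤ levelPotential x b j := by
  unfold levelPotential
  split_ifs
  · refine Finset.prod_nonneg fun l hl => inv_nonneg.2 (sub_nonneg.2 (hx1 l ?_).le)
    exact Finset.Ico_subset_Ico_left hj hl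
  · rfl

lemma one_le_levelPotential (hx0 : ∀ l ∈ Finset.Ico a b, 0 ≤ x l)
    (hx1 : ∀ l ∈ Finset.Ico a b, x l < 1) {j : ℕ} (haj : a ≤ j) (hjb : j < b) :
    1 ≤ levelPotential x b j := by
  rw [levelPotential_of_lt hjb]
  refine Finset.one_le_prod fun l hl => ?_
  have hl' := Finset.Ico_subset_Ico_left haj hl
  exact (one_le_inv₀ (sub_pos.2 (hx1 l hl'))).2 (sub_le_self _ (hx0 l hl'))

lemma levelPotential_succ_le (hx1 : ∀ l ∈ Finset.Ico a b, x l < 1) {j : ℕ}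
    (hj : j ∈ Finset.Ico a b) :
    levelPotential x b (j + 1) ≤ (1 - x j) * levelPotential x b j := by
  obtain ⟨haj, hjb⟩ := Finset.mem_Ico.1 hj
  have hpos : 0 < 1 - x j := sub_pos.2 (hx1 j hj)
  rcases (Nat.succ_le_of_lt hjb).lt_or_eq with h | h
  · rw [levelPotential_of_lt h, levelPotential_of_lt hjb, Finset.prod_eq_prod_Ico_succ_bot hjb,
      mul_inv_cancel_left₀ hpos.ne']
  · rw [levelPotential_of_le h.ge]
    exact mul_nonneg hpos.le (levelPotential_nonneg hx1 haj)

lemma levelPotential_antitoneOn (hx0 : ∀ l ∈ Finset.Ico a b, 0 ≤ x l)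
    (hx1 : ∀ l ∈ Finset.Ico a b, x l < 1) : AntitoneOn (levelPotential x b) (Set.Ici a) := by
  refine antitoneOn_nat_Ici_of_succ_le fun j hj => ?_
  rcases lt_or_ge j b with hjb | hjb
  · have hj' := Finset.mem_Ico.2 ⟨hj, hjb⟩
    exact (levelPotential_succ_le hx1 hj').trans <|
      mul_le_of_le_one_left (levelPotential_nonneg hx1 hj) (sub_le_self _ (hx0 j hj'))
  · rw [levelPotential_of_le hjb, levelPotential_of_le (by omega)]

lemma levelPotential_le_sum (hx0 : ∀ l ∈ Finset.Ico a b, 0 ≤ x l)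
    (hx1 : ∀ l ∈ Finset.Ico a b, x l < 1) {j k : ℕ} (haj : a ≤ j) (hjk : j ≤ k) :
    levelPotential x b k ≤ ∑ l ∈ Finset.Ico a b, levelPotential x b l *
      ((1 - x l) * (if j = l then 1 else 0) + x l * (if j = l ∧ k = l then 1 else 0)) := by
  rcases lt_or_ge j b with hjb | hjb
  · have hj := Finset.mem_Ico.2 ⟨haj, hjb⟩
    rw [Finset.sum_eq_single_of_mem j hj fun l _ hl => by simp [hl.symm]]
    rcases hjk.eq_or_lt with rfl | hlt
    · simp
    · simp only [hlt.ne', and_false, if_true, if_false, mul_one, mul_zero, add_zero]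
      rw [mul_comm]
      exact (levelPotential_antitoneOn hx0 hx1 (by simp; omega) (by simp; omega)
        (Nat.succ_le_of_lt hlt)).trans (levelPotential_succ_le hx1 hj)
  · rw [levelPotential_of_le (hjb.trans hjk)]
    refine Finset.sum_nonneg fun l hl => ?_
    have := (Finset.mem_Ico.1 hl).2
    simp [show j ≠ l by omega]

lemma levelPotential_comp_eq_sum {Ω : Type*} {f : Ω → ℕ} (ha : ∀ ω, a ≤ f ω) (ω : Ω) :
    levelPotential x b (f ω) =
      ∑ l ∈ Finset.Ico a b, levelPotential x b l * {ω | f ω = l}.indicator 1 ω := by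
  rcases lt_or_ge (f ω) b with h | h
  · rw [Finset.sum_eq_single_of_mem _ (Finset.mem_Ico.2 ⟨ha ω, h⟩)
      fun l _ hl => by simp [hl.symm]]
    simp
  · rw [levelPotential_of_le h, Finset.sum_eq_zero]
    intro l hl
    simp [show f ω ≠ l by have := (Finset.mem_Ico.1 hl).2; omega]

variable {Ω : Type*} [MeasurableSpace Ω] {μ : Measure Ω} [IsFiniteMeasure μ]

lemma integrable_indicator_one {s : Set Ω} (hs : MeasurableSet s) :
    Integrable (s.indicator (1 : Ω → ℝ)) μ :=
  (integrable_const (1 : ℝ)).indicator hs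

lemma integrable_levelPotential {f : Ω → ℕ} (hf : Measurable f) (ha : ∀ ω, a ≤ f ω) :
    Integrable (fun ω => levelPotential x b (f ω)) μ := by
  simp_rw [levelPotential_comp_eq_sum ha]
  exact integrable_finsetSum _ fun l _ =>
    (integrable_indicator_one (hf (measurableSet_singleton l))).const_mul _

lemma integral_levelPotential {f : Ω → ℕ} (hf : Measurable f) (ha : ∀ ω, a ≤ f ω) :
    ∫ ω, levelPotential x b (f ω) ∂μ =
      ∑ l ∈ Finset.Ico a b, levelPotential x b l * μ.real {ω | f ω = l} := by
  have hm (l : ℕ) : MeasurableSet {ω | f ω = l} := hf (measurableSet_singleton l)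
  simp_rw [levelPotential_comp_eq_sum ha]
  rw [integral_finsetSum _ fun l _ => (integrable_indicator_one (hm l)).const_mul _]
  simp_rw [integral_const_mul, integral_indicator_one (hm _)]

lemma integral_levelPotential_le {f g : Ω → ℕ} (hf : Measurable f) (hg : Measurable g)
    (ha : ∀ ω, a ≤ f ω) (hfg : ∀ ω, f ω ≤ g ω) (hx0 : ∀ l ∈ Finset.Ico a b, 0 ≤ x l)
    (hx1 : ∀ l ∈ Finset.Ico a b, x l < 1) {p : ℕ → ℝ} {θ : ℝ}
    (hθ : ∀ l ∈ Finset.Ico a b, θ ≤ (1 - p l) * x l)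
    (hstay : ∀ l ∈ Finset.Ico a b, μ.real {ω | f ω = l ∧ g ω = l} ≤ p l * μ.real {ω | f ω = l}) :
    ∫ ω, levelPotential x b (g ω) ∂μ ≤ (1 - θ) * ∫ ω, levelPotential x b (f ω) ∂μ := by
  have hm (l : ℕ) : MeasurableSet {ω | f ω = l} := hf (measurableSet_singleton l)
  have hm' (l : ℕ) : MeasurableSet {ω | f ω = l ∧ g ω = l} :=
    (hm l).inter (hg (measurableSet_singleton l))
  have hint (l : ℕ) : Integrable (fun ω => levelPotential x b l *
      ((1 - x l) * {ω | f ω = l}.indicator 1 ω +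
        x l * {ω | f ω = l ∧ g ω = l}.indicator 1 ω)) μ :=
    (((integrable_indicator_one (hm l)).const_mul _).add
      ((integrable_indicator_one (hm' l)).const_mul _)).const_mul _
  calc ∫ ω, levelPotential x b (g ω) ∂μ
      ≤ ∫ ω, ∑ l ∈ Finset.Ico a b, levelPotential x b l *
          ((1 - x l) * {ω | f ω = l}.indicator 1 ω +
            x l * {ω | f ω = l ∧ g ω = l}.indicator 1 ω) ∂μ := by
        refine integral_mono (integrable_levelPotential hg fun ω => (ha ω).trans (hfg ω))
          (integrable_finsetSum _ fun l _ => hint l) fun ω => ?_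
        simpa [Set.indicator_apply] using levelPotential_le_sum hx0 hx1 (ha ω) (hfg ω)
    _ = ∑ l ∈ Finset.Ico a b, levelPotential x b l *
          ((1 - x l) * μ.real {ω | f ω = l} + x l * μ.real {ω | f ω = l ∧ g ω = l}) := by
        rw [integral_finsetSum _ fun l _ => hint l]
        refine Finset.sum_congr rfl fun l _ => ?_
        rw [integral_const_mul, integral_add ((integrable_indicator_one (hm l)).const_mul _)
          ((integrable_indicator_one (hm' l)).const_mul _), integral_const_mul,
          integral_const_mul, integral_indicator_one (hm l), integral_indicator_one (hm' l)]
    _ ≤ ∑ l ∈ Finset.Ico a b,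
          (1 - θ) * (levelPotential x b l * μ.real {ω | f ω = l}) := by
        refine Finset.sum_le_sum fun l hl => ?_
        rw [mul_left_comm (1 - θ)]
        refine mul_le_mul_of_nonneg_left ?_ (levelPotential_nonneg hx1 (Finset.mem_Ico.1 hl).1)
        nlinarith [mul_le_mul_of_nonneg_left (hstay l hl) (hx0 l hl),
          mul_le_mul_of_nonneg_right (hθ l hl) (measureReal_nonneg (μ := μ) (s := {ω | f ω = l}))]
    _ = (1 - θ) * ∫ ω, levelPotential x b (f ω) ∂μ := by
        rw [integral_levelPotential hf ha, Finset.mul_sum]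

lemma measureReal_lt_le_of_stay_le {μ : Measure Ω} [IsProbabilityMeasure μ] {N : ℕ → Ω → ℕ}
    (hN : ∀ i, Measurable (N i)) (hmono : ∀ ω, Monotone (N · ω))
    (h0 : ∀ ω, N 0 ω = a) (hab : a < b) {M : ℕ}
    (hx0 : ∀ l ∈ Finset.Ico a b, 0 ≤ x l) (hx1 : ∀ l ∈ Finset.Ico a b, x l < 1)
    {p : ℕ → ℝ} {θ : ℝ} (hθ : ∀ l ∈ Finset.Ico a b, θ ≤ (1 - p l) * x l) (hθ1 : θ ≤ 1)
    (hstay : ∀ i < M, ∀ l ∈ Finset.Ico a b,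
      μ.real {ω | N i ω = l ∧ N (i + 1) ω = l} ≤ p l * μ.real {ω | N i ω = l}) :
    μ.real {ω | N M ω < b} ≤ (∏ l ∈ Finset.Ico a b, (1 - x l)⁻¹) * (1 - θ) ^ M := by
  have ha (i : ℕ) (ω : Ω) : a ≤ N i ω := (h0 ω).symm.le.trans (hmono ω i.zero_le)
  have decay : ∀ i ≤ M, ∫ ω, levelPotential x b (N i ω) ∂μ ≤
      levelPotential x b a * (1 - θ) ^ i := by
    intro i hi
    induction i with
    | zero => simp [h0]
    | succ i ih =>
      rw [pow_succ', mul_left_comm]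
      exact (integral_levelPotential_le (hN i) (hN (i + 1)) (ha i)
        (fun ω => hmono ω i.le_succ) hx0 hx1 hθ (hstay i hi)).trans <|
        mul_le_mul_of_nonneg_left (ih (by omega)) (sub_nonneg.2 hθ1)
  have hm : MeasurableSet {ω | N M ω < b} := measurableSet_lt (hN M) measurable_const
  rw [← levelPotential_of_lt hab, ← integral_indicator_one hm]
  refine (integral_mono (integrable_indicator_one hm)
    (integrable_levelPotential (hN M) (ha M)) fun ω => ?_).trans (decay M le_rfl)
  by_cases h : N M ω < b
  · simpa [h] using one_le_levelPotential hx0 hx1 (ha M ω) h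
  · simpa [h] using levelPotential_nonneg hx1 (ha M ω)

end MonotoneProcess

section CutSize

/-- The number `a (n - a)` of edges between `a` vertices and the other `n - a` vertices. -/
def cutSize (n a : ℕ) : ℝ := a * (n - a)

lemma cutSize_pos {n a : ℕ} (ha : 0 < a) (han : a < n) : 0 < cutSize n a :=
  mul_pos (Nat.cast_pos.2 ha) (sub_pos.2 (Nat.cast_lt.2 han))

lemma cutSize_le_sq {n a : ℕ} (han : a ≤ n) : cutSize n a ≤ n ^ 2 := by
  have : (a : ℝ) ≤ n := Nat.cast_le.2 han
  unfold cutSize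
  nlinarith

lemma cutSize_le_cutSize {n a l : ℕ} (hal : a ≤ l) (hln : a + l ≤ n) :
    cutSize n a ≤ cutSize n l := by
  have hal' : (a : ℝ) ≤ l := Nat.cast_le.2 hal
  have hln' : (a : ℝ) + l ≤ n := mod_cast hln
  unfold cutSize
  nlinarith

lemma cutSize_div_cutSize_mem_Ioc {n a b l : ℕ} (ha : 0 < a) (hb : a + b ≤ n + 1)
    (hl : l ∈ Finset.Ico a b) : cutSize n a / cutSize n l ∈ Set.Ioc 0 1 := by
  obtain ⟨hal, hlb⟩ := Finset.mem_Ico.1 hl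
  have hl_pos : 0 < cutSize n l := cutSize_pos (by omega) (by omega)
  exact ⟨div_pos (cutSize_pos ha (by omega)) hl_pos,
    (div_le_one hl_pos).2 (cutSize_le_cutSize hal (by omega))⟩

/-- The prefactor of the Chernoff bound for the growth from size `a` to size `b`; it stays moderate
because the cut only gets larger on the way. -/
def growthWeight (n a b : ℕ) (ε : ℝ) : ℝ :=
  ∏ l ∈ Finset.Ico a b, (1 - (1 - ε) * (cutSize n a / cutSize n l))⁻¹

lemma exp_le_one_add_add_sq {x : ℝ} (hx : |x| ≤ 1) : Real.exp x ≤ 1 + x + x ^ 2 := by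
  linarith [le_of_abs_le (Real.abs_exp_sub_one_sub_id_le hx)]

lemma mul_le_one_sub_exp_neg {u ε : ℝ} (hu : 0 ≤ u) (huε : u ≤ ε) (hε : ε ≤ 1) :
    (1 - ε) * u ≤ 1 - Real.exp (-u) := by
  have := exp_le_one_add_add_sq (x := -u) (by rw [abs_neg, abs_of_nonneg hu]; linarith)
  nlinarith

lemma mul_cutSize_le_one_sub_pow {n l : ℕ} (hl : l ≤ n) {q κ ε : ℝ} (hq0 : 0 ≤ q)
    (hq : q ≤ Real.exp (-κ)) (hκ0 : 0 ≤ κ) (hκ : κ * cutSize n l ≤ ε) (hε : ε ≤ 1) :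
    (1 - ε) * (κ * cutSize n l) ≤ 1 - q ^ (l * (n - l)) := by
  have hcut : cutSize n l = (l * (n - l) : ℕ) := by
    rw [cutSize, Nat.cast_mul, Nat.cast_sub hl]
  refine (mul_le_one_sub_exp_neg (mul_nonneg hκ0 (hcut ▸ Nat.cast_nonneg _)) hκ hε).trans ?_
  refine sub_le_sub_left ((pow_le_pow_left₀ hq0 hq _).trans_eq ?_) 1
  rw [← Real.exp_nat_mul, hcut, mul_neg, mul_comm]

/- Chernoff bound for the time at which the infection has left all levels below `b`. Choosing the
exponent at level `l` inversely proportional to the cut size makes all levels decay alike. -/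
lemma measureReal_ncard_spread_lt_le {V α : Type*} [Fintype V] [MeasurableSpace α]
    {ν : Measure α} [IsProbabilityMeasure ν] {Act : ℕ → Set α} {M : ℕ} {q κ ε : ℝ}
    (hAct : ∀ i, MeasurableSet (Act i)) (hν : AvoidProbLE ν Act M q) (hq0 : 0 ≤ q)
    (hq : q ≤ Real.exp (-κ)) (hκ0 : 0 ≤ κ) (hκ : κ * (Nat.card V : ℝ) ^ 2 ≤ ε) (hε0 : 0 < ε)
    (hε1 : ε < 1) {S : Set V} (hS : S.Nonempty) {b : ℕ} (hSb : S.ncard < b)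
    (hb : S.ncard + b ≤ Nat.card V + 1) :
    (Measure.pi fun _ : Sym2 V => ν).real {ω | (spread (active Act ω) S M).ncard < b} ≤
      growthWeight (Nat.card V) S.ncard b ε *
        Real.exp (-((1 - ε) ^ 2 * (κ * M) * cutSize (Nat.card V) S.ncard)) := by
  set n := Nat.card V
  set a := S.ncard
  have ratio := fun l hl => cutSize_div_cutSize_mem_Ioc (l := l) hS.ncard_pos hb hl
  have cut_le {l : ℕ} (hl : l ≤ n) : κ * cutSize n l ≤ ε :=
    (mul_le_mul_of_nonneg_left (cutSize_le_sq hl) hκ0).trans hκ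
  have hθ : (1 - ε) ^ 2 * (κ * cutSize n a) ≤ 1 := by nlinarith [cut_le (l := a) (by omega)]
  have tilt_nonneg : ∀ l ∈ Finset.Ico a b, 0 ≤ (1 - ε) * (cutSize n a / cutSize n l) :=
    fun l hl => mul_nonneg (sub_nonneg.2 hε1.le) (ratio l hl).1.le
  have tilt_lt_one : ∀ l ∈ Finset.Ico a b, (1 - ε) * (cutSize n a / cutSize n l) < 1 :=
    fun l hl => by nlinarith [(ratio l hl).1, (ratio l hl).2]
  have rate : ∀ l ∈ Finset.Ico a b, (1 - ε) ^ 2 * (κ * cutSize n a) ≤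
      (1 - q ^ (l * (n - l))) * ((1 - ε) * (cutSize n a / cutSize n l)) := by
    intro l hl
    have hln : l ≤ n := by have := (Finset.mem_Ico.1 hl).2; omega
    have hl_ne : cutSize n l ≠ 0 := fun h => by simpa [h] using (ratio l hl).1
    refine le_of_eq_of_le ?_ (mul_le_mul_of_nonneg_right
      (mul_cutSize_le_one_sub_pow hln hq0 hq hκ0 (cut_le hln) hε1.le) (tilt_nonneg l hl))
    field_simp
  have chernoff := measureReal_lt_le_of_stay_le (μ := Measure.pi fun _ : Sym2 V => ν)
    (N := fun i ω => (spread (active Act ω) S i).ncard)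
    (fun i => (measurable_of_finite Set.ncard).comp (measurable_spread_active hAct S i))
    (fun ω i j hij => Set.ncard_le_ncard (spread_monotone _ S hij)) (fun ω => rfl) hSb
    tilt_nonneg tilt_lt_one rate hθ
    fun i hi l _ => measureReal_ncard_spread_stay_le hAct hν S hi l
  refine chernoff.trans (mul_le_mul_of_nonneg_left ?_
    (Finset.prod_nonneg fun l hl => inv_nonneg.2 (sub_nonneg.2 (tilt_lt_one l hl).le)))
  refine (pow_le_pow_left₀ (sub_nonneg.2 hθ) (Real.one_sub_le_exp_neg _) M).trans_eq ?_
  rw [← Real.exp_nat_mul]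
  ring_nf

end CutSize

section GrowthWeight

variable {n a b : ℕ} {ε : ℝ}

lemma growthWeight_factor_bounds (ha : 0 < a) (hb : a + b ≤ n + 1) (hε0 : 0 < ε) (hε1 : ε < 1)
    {l : ℕ} (hl : l ∈ Finset.Ico a b) :
    0 ≤ (1 - (1 - ε) * (cutSize n a / cutSize n l))⁻¹ ∧
      (1 - (1 - ε) * (cutSize n a / cutSize n l))⁻¹ ≤ ε⁻¹ := by
  obtain ⟨h0, h1⟩ := cutSize_div_cutSize_mem_Ioc ha hb hl
  have : ε ≤ 1 - (1 - ε) * (cutSize n a / cutSize n l) := by nlinarith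
  exact ⟨inv_nonneg.2 (hε0.le.trans this), inv_anti₀ hε0 this⟩

lemma growthWeight_nonneg (ha : 0 < a) (hb : a + b ≤ n + 1) (hε0 : 0 < ε) (hε1 : ε < 1) :
    0 ≤ growthWeight n a b ε :=
  Finset.prod_nonneg fun _ hl => (growthWeight_factor_bounds ha hb hε0 hε1 hl).1

lemma growthWeight_le_inv_pow (ha : 0 < a) (hb : a + b ≤ n + 1) (hε0 : 0 < ε) (hε1 : ε < 1) :
    growthWeight n a b ε ≤ ε⁻¹ ^ (b - a) := by
  refine (Finset.prod_le_prod (fun l hl => (growthWeight_factor_bounds ha hb hε0 hε1 hl).1)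
    fun l hl => (growthWeight_factor_bounds ha hb hε0 hε1 hl).2).trans_eq ?_
  rw [Finset.prod_const, Nat.card_Ico]

lemma inv_one_sub_mul_le_exp {ρ : ℝ} (h0 : 0 ≤ ρ) (h1 : ρ ≤ 1) (hε0 : 0 < ε) (hε1 : ε < 1) :
    (1 - (1 - ε) * ρ)⁻¹ ≤ Real.exp (ρ + ρ ^ 2 / ε) := by
  have hpos : ε ≤ 1 - (1 - ε) * ρ := by nlinarith
  refine ((inv_le_iff_one_le_mul₀ (hε0.trans_le hpos)).2 ?_).trans (Real.add_one_le_exp _)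
  have hsq : ρ ^ 2 ≤ ρ ^ 2 / ε * (1 - (1 - ε) * ρ) := by
    rw [div_mul_eq_mul_div, le_div_iff₀ hε0]
    exact mul_le_mul_of_nonneg_left hpos (sq_nonneg ρ)
  nlinarith

lemma cutSize_div_cutSize_le {l : ℕ} (hl0 : 0 < l) (hln : 3 * l ≤ 2 * n) :
    cutSize n a / cutSize n l ≤ a / l + 3 * a / n ∧ cutSize n a / cutSize n l ≤ 3 * (a / l) := by
  have hl : (0 : ℝ) < l := Nat.cast_pos.2 hl0
  have hln' : 3 * (l : ℝ) ≤ 2 * n := mod_cast hln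
  have hn : (0 : ℝ) < n := by linarith
  have hnl : (0 : ℝ) < n - l := by linarith
  have ha : (0 : ℝ) ≤ a := a.cast_nonneg
  have drop : cutSize n a / cutSize n l ≤ a * n / (l * (n - l)) := by
    unfold cutSize
    gcongr
    linarith
  refine ⟨drop.trans ?_, drop.trans ?_⟩
  · have split : (a : ℝ) * n / (l * (n - l)) = a / l + a / (n - l) := by
      field_simp
      ring
    rw [split]
    refine add_le_add_right ?_ _
    rw [div_le_div_iff₀ hnl hn]
    nlinarith
  · rw [← mul_div_assoc, div_le_div_iff₀ (mul_pos hl hnl) hl]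
    nlinarith [mul_nonneg ha hl.le]

lemma sum_Ico_div_le (ha : 0 < a) (hb : b ≤ n + 1) :
    ∑ l ∈ Finset.Ico a b, (a : ℝ) / l ≤ a * (1 + Real.log n) := by
  have harmonic_le := harmonic_le_one_add_log n
  rw [harmonic_eq_sum_Icc] at harmonic_le
  push_cast at harmonic_le
  simp_rw [div_eq_mul_inv, ← Finset.mul_sum]
  refine mul_le_mul_of_nonneg_left (le_trans ?_ harmonic_le) a.cast_nonneg
  refine Finset.sum_le_sum_of_subset_of_nonneg (fun l hl => ?_) fun i _ _ => by positivity
  rw [Finset.mem_Ico] at hl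
  exact Finset.mem_Icc.2 (by omega)

lemma sum_Ico_div_sq_le (ha : 0 < a) : ∑ l ∈ Finset.Ico a b, ((a : ℝ) / l) ^ 2 ≤ 2 * a := by
  have h := sum_Ioo_inv_sq_le (α := ℝ) (a - 1) b
  have ha' : ((a - 1 : ℕ) : ℝ) + 1 = a := mod_cast Nat.sub_add_cancel ha
  rw [← Finset.Ico_add_one_left_eq_Ioo, ha', show a - 1 + 1 = a from Nat.sub_add_cancel ha] at h
  calc ∑ l ∈ Finset.Ico a b, ((a : ℝ) / l) ^ 2
      = a ^ 2 * ∑ l ∈ Finset.Ico a b, ((l : ℝ) ^ 2)⁻¹ := by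
        simp_rw [Finset.mul_sum, div_pow, div_eq_mul_inv]
    _ ≤ a ^ 2 * (2 / a) := by gcongr
    _ = 2 * a := by field_simp

lemma growthWeight_le_exp (ha : 0 < a) (hb : a + b ≤ n + 1) (hb3 : 3 * b ≤ 2 * n + 3)
    (hε0 : 0 < ε) (hε1 : ε < 1) :
    growthWeight n a b ε ≤ Real.exp (a * (Real.log n + 4 + 18 / ε)) := by
  have factor_le : ∀ l ∈ Finset.Ico a b, (1 - (1 - ε) * (cutSize n a / cutSize n l))⁻¹ ≤
      Real.exp ((a / l + 3 * a / n) + 9 / ε * ((a : ℝ) / l) ^ 2) := by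
    intro l hl
    obtain ⟨h0, h1⟩ := cutSize_div_cutSize_mem_Ioc ha hb hl
    rw [Finset.mem_Ico] at hl
    obtain ⟨hharm, hlin⟩ := cutSize_div_cutSize_le (n := n) (a := a) (l := l) (by omega) (by omega)
    refine (inv_one_sub_mul_le_exp h0.le h1 hε0 hε1).trans (Real.exp_le_exp.2 ?_)
    refine add_le_add hharm ?_
    rw [div_mul_eq_mul_div]
    refine div_le_div_of_nonneg_right ((pow_le_pow_left₀ h0.le hlin 2).trans_eq ?_) hε0.le
    ring
  have const_le : ((b - a : ℕ) : ℝ) * (3 * a / n) ≤ 3 * a := by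
    have hba : ((b - a : ℕ) : ℝ) ≤ n := Nat.cast_le.2 (by omega)
    rw [mul_div_left_comm]
    exact mul_le_of_le_one_right (by positivity) (div_le_one_of_le₀ hba n.cast_nonneg)
  have sq_le : 9 / ε * ∑ l ∈ Finset.Ico a b, ((a : ℝ) / l) ^ 2 ≤ a * (18 / ε) :=
    (mul_le_mul_of_nonneg_left (sum_Ico_div_sq_le ha) (by positivity)).trans_eq (by ring)
  calc growthWeight n a b ε
      ≤ ∏ l ∈ Finset.Ico a b, Real.exp ((a / l + 3 * a / n) + 9 / ε * ((a : ℝ) / l) ^ 2) :=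
        Finset.prod_le_prod (fun l hl => (growthWeight_factor_bounds ha hb hε0 hε1 hl).1) factor_le
    _ = Real.exp (∑ l ∈ Finset.Ico a b, (a : ℝ) / l + (b - a : ℕ) * (3 * a / n) +
          9 / ε * ∑ l ∈ Finset.Ico a b, ((a : ℝ) / l) ^ 2) := by
        rw [← Real.exp_sum, Finset.sum_add_distrib, Finset.sum_add_distrib, ← Finset.mul_sum]
        simp
    _ ≤ Real.exp (a * (Real.log n + 4 + 18 / ε)) := by
        gcongr
        linarith [sum_Ico_div_le (n := n) ha (show b ≤ n + 1 by omega)]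

end GrowthWeight

section CountingBound

variable {n a b : ℕ} {ε A : ℝ}

/- For small sets the harmonic sum makes the weight about `n ^ a`, which together with the `n ^ a`
possible sets uses up the rate `2 log n` per vertex. -/
lemma choose_mul_growthWeight_mul_exp_le_of_le (ha : 0 < a) (hb : a + b ≤ n + 1)
    (hb3 : 3 * b ≤ 2 * n + 3) (hε0 : 0 < ε) (hε1 : ε < 1) (hA : 0 ≤ A) {γ δ : ℝ}
    (hAδ : 1 + γ ≤ A * (1 - δ)) (hn : 0 < n) (haδ : a ≤ δ * n) :
    n.choose a *
        (growthWeight n a b ε * Real.exp (-(2 * A * Real.log n / n * cutSize n a))) ≤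
      Real.exp (4 + 18 / ε - 2 * γ * Real.log n) ^ a := by
  have hn' : (0 : ℝ) < n := Nat.cast_pos.2 hn
  have choose_le : (n.choose a : ℝ) ≤ Real.exp (a * Real.log n) := by
    rw [Real.exp_nat_mul, Real.exp_log hn']
    exact mod_cast Nat.choose_le_pow n a
  have rate_ge : a * (2 * (1 + γ) * Real.log n) ≤ 2 * A * Real.log n / n * cutSize n a := by
    have hAn : (1 + γ) * (n : ℝ) ≤ A * (n - a) :=
      (mul_le_mul_of_nonneg_right hAδ hn'.le).trans (by nlinarith)
    have hlog : 0 ≤ a * Real.log n := mul_nonneg a.cast_nonneg (Real.log_natCast_nonneg n)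
    rw [cutSize, div_mul_eq_mul_div, le_div_iff₀ hn']
    nlinarith [mul_le_mul_of_nonneg_left hAn hlog]
  calc _ ≤ Real.exp (a * Real.log n) * (Real.exp (a * (Real.log n + 4 + 18 / ε)) *
        Real.exp (-(a * (2 * (1 + γ) * Real.log n)))) := by
        gcongr
        · exact mul_nonneg (growthWeight_nonneg ha hb hε0 hε1) (Real.exp_nonneg _)
        · exact growthWeight_le_exp ha hb hb3 hε0 hε1
    _ = _ := by
        rw [← Real.exp_add, ← Real.exp_add, ← Real.exp_nat_mul]
        ring_nf

/- For linearly large sets any bound `C ^ n` on the weight and the number of sets suffices. -/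
lemma choose_mul_growthWeight_mul_exp_le_of_ge (ha : 0 < a) (ha2 : 2 * a ≤ n)
    (hb : a + b ≤ n + 1) (hε0 : 0 < ε) (hε1 : ε < 1) (hA : 1 ≤ A) {δ : ℝ} (hδ : 0 < δ)
    (haδ : δ * n ≤ a) :
    n.choose a *
        (growthWeight n a b ε * Real.exp (-(2 * A * Real.log n / n * cutSize n a))) ≤
      Real.exp (Real.log (2 * ε⁻¹) / δ - Real.log n) ^ a := by
  have hn' : (0 : ℝ) < n := Nat.cast_pos.2 (by omega)
  have ha2' : 2 * (a : ℝ) ≤ n := mod_cast ha2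
  have hε : 1 ≤ ε⁻¹ := (one_le_inv₀ hε0).2 hε1.le
  have weight_le : growthWeight n a b ε ≤ ε⁻¹ ^ n :=
    (growthWeight_le_inv_pow ha hb hε0 hε1).trans (pow_le_pow_right₀ hε (by omega))
  have count_le : n.choose a * growthWeight n a b ε ≤ Real.exp (a * (Real.log (2 * ε⁻¹) / δ)) :=
    calc n.choose a * growthWeight n a b ε ≤ 2 ^ n * ε⁻¹ ^ n :=
          mul_le_mul (mod_cast Nat.choose_le_two_pow n a) weight_le
            (growthWeight_nonneg ha hb hε0 hε1) (by positivity)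
      _ = Real.exp (n * Real.log (2 * ε⁻¹)) := by
          rw [Real.exp_nat_mul, Real.exp_log (by positivity), mul_pow]
      _ ≤ Real.exp (a * (Real.log (2 * ε⁻¹) / δ)) := by
          have hlog : 0 ≤ Real.log (2 * ε⁻¹) := Real.log_nonneg (by linarith)
          rw [mul_div_assoc', Real.exp_le_exp, le_div_iff₀ hδ]
          nlinarith
  have rate_ge : a * Real.log n ≤ 2 * A * Real.log n / n * cutSize n a := by
    have hAn : (n : ℝ) ≤ 2 * A * (n - a) := by nlinarith
    have hlog : 0 ≤ a * Real.log n := mul_nonneg a.cast_nonneg (Real.log_natCast_nonneg n)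
    rw [cutSize, div_mul_eq_mul_div, le_div_iff₀ hn']
    nlinarith [mul_le_mul_of_nonneg_left hAn hlog]
  calc _ = n.choose a * growthWeight n a b ε *
        Real.exp (-(2 * A * Real.log n / n * cutSize n a)) := (mul_assoc _ _ _).symm
    _ ≤ Real.exp (a * (Real.log (2 * ε⁻¹) / δ)) * Real.exp (-(a * Real.log n)) := by
        gcongr
    _ = _ := by
        rw [← Real.exp_add, ← Real.exp_nat_mul]
        ring_nf

/-- The union bound over the `n.choose a` sets of size `a`, each failing to grow to size `b` while
every edge is activated at total rate `c`, costs at most `y ^ a`. The constraints allow for the size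
`b = min (n - a) (2 * n / 3) + 1` demanded by `Expands`. -/
def CountingBound (n : ℕ) (ε c y : ℝ) : Prop :=
  ∀ a b : ℕ, 0 < a → 2 * a ≤ n → a + b ≤ n + 1 → 3 * b ≤ 2 * n + 3 →
    n.choose a * (growthWeight n a b ε * Real.exp (-(c * cutSize n a))) ≤ y ^ a

lemma tendsto_exp_sub_mul_log (C : ℝ) {c : ℝ} (hc : 0 < c) :
    Tendsto (fun n : ℕ => Real.exp (C - c * Real.log n)) atTop (𝓝 0) :=
  Real.tendsto_exp_atBot.comp <| tendsto_atBot_add_const_left _ C <|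
    tendsto_neg_atTop_atBot.comp <|
      (Real.tendsto_log_atTop.comp tendsto_natCast_atTop_atTop).const_mul_atTop hc

lemma exists_tendsto_zero_countingBound (hε0 : 0 < ε) (hε1 : ε < 1) (hA : 1 < A) :
    ∃ y : ℕ → ℝ, (∀ n, 0 ≤ y n) ∧ Tendsto y atTop (𝓝 0) ∧
      ∀ n : ℕ, CountingBound n ε (2 * A * Real.log n / n) (y n) := by
  set δ := (A - 1) / (2 * A)
  set γ := (A - 1) / 2
  have hδ : 0 < δ := div_pos (by linarith) (by linarith)
  have hAδ : 1 + γ ≤ A * (1 - δ) := le_of_eq <| by simp only [γ, δ]; field_simp; ring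
  refine ⟨fun n => max (Real.exp (4 + 18 / ε - 2 * γ * Real.log n))
    (Real.exp (Real.log (2 * ε⁻¹) / δ - Real.log n)), fun n => ?_, ?_, ?_⟩
  · positivity
  · rw [← max_self (0 : ℝ)]
    exact (tendsto_exp_sub_mul_log _ (by simp only [γ]; linarith)).max
      (by simpa using tendsto_exp_sub_mul_log (Real.log (2 * ε⁻¹) / δ) one_pos)
  · intro n a b ha ha2 hb hb3
    rcases le_total (a : ℝ) (δ * n) with haδ | haδ
    · exact (choose_mul_growthWeight_mul_exp_le_of_le ha hb hb3 hε0 hε1 (by linarith) hAδ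
        (by omega) haδ).trans (pow_le_pow_left₀ (Real.exp_nonneg _) (le_max_left _ _) a)
    · exact (choose_mul_growthWeight_mul_exp_le_of_ge ha ha2 hb hε0 hε1 hA.le hδ haδ).trans
        (pow_le_pow_left₀ (Real.exp_nonneg _) (le_max_right _ _) a)

end CountingBound

section Expansion

variable {V : Type*}

lemma measureReal_exists_nonempty_le {Ω : Type*} [Finite V] [MeasurableSpace Ω]
    {μ : Measure Ω} {bad : Finset V → Set Ω} {y : ℝ} (hy0 : 0 ≤ y) (hy : y ≤ 1 / 2)
    (hbad : ∀ S : Finset V, S.Nonempty →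
      ((Nat.card V).choose S.card : ℝ) * μ.real (bad S) ≤ y ^ S.card) :
    μ.real {ω | ∃ S : Finset V, S.Nonempty ∧ ω ∈ bad S} ≤ 2 * y := by
  classical
  have := Fintype.ofFinite V
  rw [Nat.card_eq_fintype_card] at hbad
  set n := Fintype.card V
  have choose_pos {k : ℕ} (hk : k ≤ n) : (0 : ℝ) < n.choose k := mod_cast Nat.choose_pos hk
  have geom : ∑ k ∈ Finset.range (n + 1), y ^ k ≤ 1 + 2 * y := by
    nlinarith [geom_sum_mul_neg y (n + 1), pow_nonneg hy0 (n + 1)]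
  calc μ.real {ω | ∃ S : Finset V, S.Nonempty ∧ ω ∈ bad S}
      = μ.real (⋃ S ∈ Finset.univ.erase (∅ : Finset V), bad S) := by
        congr 1
        ext ω
        simp [Finset.nonempty_iff_ne_empty]
    _ ≤ ∑ S ∈ Finset.univ.erase (∅ : Finset V), μ.real (bad S) :=
        measureReal_biUnion_finset_le _ _
    _ ≤ ∑ S ∈ Finset.univ.erase (∅ : Finset V), y ^ S.card / n.choose S.card := by
        refine Finset.sum_le_sum fun S hS => ?_
        rw [le_div_iff₀' (choose_pos S.card_le_univ)]
        exact hbad S (Finset.nonempty_iff_ne_empty.2 (Finset.ne_of_mem_erase hS))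
    _ = ∑ S ∈ (Finset.univ : Finset V).powerset, y ^ S.card / n.choose S.card - 1 := by
        rw [Finset.powerset_univ, Finset.sum_erase_eq_sub (Finset.mem_univ _)]
        simp
    _ = ∑ k ∈ Finset.range (n + 1), y ^ k - 1 := by
        rw [Finset.sum_powerset_apply_card fun k => y ^ k / (n.choose k : ℝ), Finset.card_univ]
        refine congrArg (· - 1) (Finset.sum_congr rfl fun k hk => ?_)
        rw [nsmul_eq_mul, mul_div_cancel₀ _ (choose_pos (Finset.mem_range_succ_iff.1 hk)).ne']
    _ ≤ 2 * y := by linarith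

/-- Within `M` steps the infection started from any `a ≤ n / 2` of the `n` vertices reaches more
than `min (n - a) (2 n / 3)` vertices. The cap `2 n / 3` still lets sets of at most `n / 3`
vertices double. -/
def Expands (E : ℕ → Set (Sym2 V)) (M : ℕ) : Prop :=
  ∀ S : Set V, S.Nonempty → 2 * S.ncard ≤ Nat.card V →
    min (Nat.card V - S.ncard) (2 * Nat.card V / 3) < (spread E S M).ncard

lemma measureReal_not_expands_le {α : Type*} [Fintype V] [MeasurableSpace α] {ν : Measure α}
    [IsProbabilityMeasure ν] {Act : ℕ → Set α} {M : ℕ} {q κ ε y : ℝ}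
    (hAct : ∀ i, MeasurableSet (Act i)) (hν : AvoidProbLE ν Act M q) (hq0 : 0 ≤ q)
    (hq : q ≤ Real.exp (-κ)) (hκ0 : 0 ≤ κ) (hκ : κ * (Nat.card V : ℝ) ^ 2 ≤ ε) (hε0 : 0 < ε)
    (hε1 : ε < 1) (hy0 : 0 ≤ y) (hy : y ≤ 1 / 2)
    (hcount : CountingBound (Nat.card V) ε ((1 - ε) ^ 2 * (κ * M)) y) :
    (Measure.pi fun _ : Sym2 V => ν).real {ω | ¬ Expands (active Act ω) M} ≤ 2 * y := by
  classical
  set n := Nat.card V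
  let bad (S : Finset V) : Set (Sym2 V → α) := {ω | 2 * S.card ≤ n ∧
    (spread (active Act ω) S M).ncard < min (n - S.card) (2 * n / 3) + 1}
  refine (measureReal_mono fun ω hω => ?_).trans
    (measureReal_exists_nonempty_le (bad := bad) hy0 hy fun S hS => ?_)
  · simp only [Expands, not_forall, not_lt, Set.mem_ofPred_eq] at hω
    obtain ⟨S, hS, hS2, hlt⟩ := hω
    lift S to Finset V using S.toFinite
    rw [Set.ncard_coe_finset] at hS2 hlt
    exact ⟨S, Finset.coe_nonempty.1 hS, hS2, Nat.lt_succ_of_le hlt⟩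
  · by_cases hS2 : 2 * S.card ≤ n
    · have hSb : (S : Set V).ncard < min (n - S.card) (2 * n / 3) + 1 := by
        rw [Set.ncard_coe_finset]
        omega
      have growth := measureReal_ncard_spread_lt_le hAct hν hq0 hq hκ0 hκ hε0 hε1
        (Finset.coe_nonempty.2 hS) hSb (by rw [Set.ncard_coe_finset]; omega)
      rw [Set.ncard_coe_finset] at growth
      calc _ ≤ _ := mul_le_mul_of_nonneg_left
            ((measureReal_mono fun ω hω => hω.2).trans growth) (Nat.cast_nonneg _)
        _ ≤ y ^ S.card := hcount _ _ hS.card_pos hS2 (by omega) (by omega)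
    · simp [bad, hS2, pow_nonneg hy0]

end Expansion

section EdgeLaw

lemma measurable_sigma_mk (r : ℕ) : Measurable fun x : Fin r → ℝ => (⟨r, x⟩ : LabelSpace) :=
  fun _ hs => MeasurableSpace.measurableSet_iInf.1 hs r

lemma edgeMeasure_dirac (ν : Measure ℝ) (r : ℕ) :
    edgeMeasure ν (Measure.dirac r) = (Measure.pi fun _ : Fin r => ν).map fun x => ⟨r, x⟩ := by
  ext s hs
  rw [edgeMeasure, Measure.sum_apply _ hs, tsum_eq_single r fun k hk => by simp [hk.symm]]
  simp

instance (ν : Measure ℝ) [IsProbabilityMeasure ν] (r : ℕ) :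
    IsProbabilityMeasure (edgeMeasure ν (Measure.dirac r)) := by
  rw [edgeMeasure_dirac]
  exact Measure.isProbabilityMeasure_map (measurable_sigma_mk r).aemeasurable

/-- The data of an edge with at least one label in `I`. -/
def hits (I : Set ℝ) : Set LabelSpace := {l | ∃ i, l.2 i ∈ I}

lemma measurableSet_hits {I : Set ℝ} (hI : MeasurableSet I) : MeasurableSet (hits I) := by
  refine MeasurableSpace.measurableSet_iInf.2 fun k => ?_
  change MeasurableSet {x : Fin k → ℝ | ∃ i, x i ∈ I}
  rw [Set.ofPred_exists]
  exact MeasurableSet.iUnion fun i => measurable_pi_apply i hI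

lemma edgeMeasure_dirac_real_compl_hits (ν : Measure ℝ) [IsProbabilityMeasure ν] (r : ℕ)
    {I : Set ℝ} (hI : MeasurableSet I) :
    (edgeMeasure ν (Measure.dirac r)).real (hits I)ᶜ = (1 - ν.real I) ^ r := by
  have preimage : (fun x : Fin r → ℝ => (⟨r, x⟩ : LabelSpace)) ⁻¹' (hits I)ᶜ =
      Set.univ.pi fun _ => Iᶜ := by
    ext x
    simp [hits]
  rw [edgeMeasure_dirac,
    map_measureReal_apply (measurable_sigma_mk r) (measurableSet_hits hI).compl, preimage,
    measureReal_def, Measure.pi_pi, ENNReal.toReal_prod, ← probReal_compl_eq_one_sub hI]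
  simp [measureReal_def]

lemma avoidProbLE_hits {ν : Measure ℝ} [IsProbabilityMeasure ν] (r : ℕ) {slot : ℕ → Set ℝ}
    {M : ℕ} {h : ℝ} (hslot : ∀ i, MeasurableSet (slot i))
    (hdisj : (Set.Iio M).PairwiseDisjoint slot) (hh : ∀ i < M, h ≤ ν.real (slot i)) :
    AvoidProbLE (edgeMeasure ν (Measure.dirac r)) (fun i => hits (slot i)) M ((1 - h) ^ r) := by
  have avoid (J : Finset ℕ) :
      (edgeMeasure ν (Measure.dirac r)).real {a | ∀ j ∈ J, a ∉ hits (slot j)} =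
        (1 - ν.real (⋃ j ∈ J, slot j)) ^ r := by
    rw [← edgeMeasure_dirac_real_compl_hits ν r (Finset.measurableSet_biUnion J fun j _ => hslot j)]
    congr 1
    ext a
    simp only [hits, Set.mem_ofPred_eq, Set.mem_compl_iff, Set.mem_iUnion, not_exists]
    grind
  intro J hJ i hi hiJ
  have hdisj_i : Disjoint (slot i) (⋃ j ∈ J, slot j) :=
    Set.disjoint_iUnion₂_right.2 fun j hj =>
      hdisj hi (Finset.mem_range.1 (hJ hj)) (ne_of_mem_of_not_mem hj hiJ).symm
  have union_real : ν.real (slot i ∪ ⋃ j ∈ J, slot j) =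
      ν.real (slot i) + ν.real (⋃ j ∈ J, slot j) :=
    measureReal_union hdisj_i (Finset.measurableSet_biUnion J fun j _ => hslot j)
      (measure_ne_top _ _) (measure_ne_top _ _)
  have union_le_one : ν.real (slot i) + ν.real (⋃ j ∈ J, slot j) ≤ 1 :=
    union_real ▸ measureReal_le_one
  have hx : 0 ≤ ν.real (slot i) := measureReal_nonneg
  have hp : 0 ≤ ν.real (⋃ j ∈ J, slot j) := measureReal_nonneg
  have hp_le : ν.real (⋃ j ∈ J, slot j) ≤ 1 := measureReal_le_one
  rw [avoid, avoid, Finset.set_biUnion_insert, union_real, ← mul_pow]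
  refine pow_le_pow_left₀ (by linarith) ?_ r
  nlinarith [mul_nonneg (sub_nonneg.2 (hh i hi)) (sub_nonneg.2 hp_le), mul_nonneg hx hp]

end EdgeLaw

section Unif

instance : IsProbabilityMeasure unif01 := ⟨by simp [unif01]⟩

lemma unif01_real_Ioc {x y : ℝ} (hx : 0 ≤ x) (hxy : x ≤ y) (hy : y ≤ 1) :
    unif01.real (Set.Ioc x y) = y - x := by
  rw [unif01, measureReal_restrict_apply measurableSet_Ioc,
    Set.inter_eq_left.2 (Set.Ioc_subset_Ioc hx hy), Real.volume_real_Ioc_of_le hxy]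

lemma unif01_real_Iic {x : ℝ} (hx0 : 0 ≤ x) (hx1 : x ≤ 1) : unif01.real (Set.Iic x) = x := by
  rw [unif01, measureReal_restrict_apply measurableSet_Iic, Set.inter_comm, Set.Ioc_inter_Iic,
    min_eq_right hx1, Real.volume_real_Ioc_of_le hx0, sub_zero]

end Unif

section Reachability

variable {V : Type*} {Λ : TGraph V} {S : Set V} {t t' : ℝ}

lemma ball_mono (h : t ≤ t') : ball Λ S t ⊆ ball Λ S t' := by
  rintro v (hv | ⟨k, f, ts, hk, h0, hkv, hlab, hinc, ht⟩)
  · exact .inl hv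
  · exact .inr ⟨k, f, ts, hk, h0, hkv, hlab, hinc, ht.trans h⟩

lemma mem_ball_of_lt {v w : V} {l : ℝ} (hv : v ∈ ball Λ S t) (hl : l ∈ Λ s(v, w)) (htl : t < l) :
    w ∈ ball Λ S l := by
  rcases hv with hv | ⟨k, f, ts, hk, h0, rfl, hlab, hinc, ht⟩
  · refine .inr ⟨1, fun i => if i = 0 then v else w, fun _ => l, one_pos, by simpa using hv,
      by simp, fun i hi => ?_, fun i j hij hj => by omega, le_rfl⟩
    obtain rfl : i = 0 := by omega
    simpa using hl
  · have last_le {i : ℕ} (hi : i < k) : ts i ≤ ts (k - 1) := by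
      rcases (Nat.le_sub_one_of_lt hi).eq_or_lt with rfl | hlt
      · rfl
      · exact (hinc i (k - 1) hlt (by omega)).le
    refine .inr ⟨k + 1, fun i => if i ≤ k then f i else w, fun i => if i < k then ts i else l,
      by omega, by simpa using h0, by simp, fun i hi => ?_, fun i j hij hj => ?_, by simp⟩
    · rcases Nat.lt_succ_iff_lt_or_eq.1 hi with hik | rfl
      · simpa [hik, hik.le, Nat.succ_le_of_lt hik] using hlab i hik
      · simpa using hl
    · have hik : i < k := by omega
      rcases Nat.lt_succ_iff_lt_or_eq.1 hj with hjk | rfl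
      · simpa [hik, hjk] using hinc i j hij hjk
      · simpa [hik] using ((last_le hik).trans ht).trans_lt htl

lemma ball_subset_ball_of_strictMono_labels {Λ' : TGraph V} {φ : ℝ → ℝ} (hφ : Monotone φ)
    (hlab : ∀ e, ∀ l ∈ Λ e, φ l ∈ Λ' e) (hlt : ∀ e, ∀ l ∈ Λ e, ∀ x < l, φ x < φ l) :
    ball Λ S t ⊆ ball Λ' S (φ t) := by
  rintro v (hv | ⟨k, f, ts, hk, h0, hkv, hts, hinc, ht⟩)
  · exact .inl hv
  · exact .inr ⟨k, f, φ ∘ ts, hk, h0, hkv, fun i hi => hlab _ _ (hts i hi),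
      fun i j hij hj => hlt _ _ (hts j hj) _ (hinc i j hij hj), hφ ht⟩

lemma doubleAll_le_of_forall [Fintype V] (ht : 0 ≤ t)
    (h : ∀ S : Set V, S.Nonempty → 2 * S.ncard ≤ Nat.card V → 2 * S.ncard ≤ (ball Λ S t).ncard) :
    doubleAll Λ ≤ ENNReal.ofReal t :=
  iSup₂_le fun S hS => iInf₂_le t ⟨ht, h S hS.1 (Nat.card_eq_fintype_card (α := V) ▸ hS.2)⟩

variable {τ : ℕ → ℝ} {E : ℕ → Set (Sym2 V)} {M : ℕ}

lemma spread_subset_ball (hτ : Monotone τ)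
    (hE : ∀ i, ∀ e ∈ E i, ¬ e.IsDiag → ∃ l ∈ Λ e, l ∈ Set.Ioc (τ i) (τ (i + 1))) (i : ℕ) :
    spread E S i ⊆ ball Λ S (τ i) := by
  induction i with
  | zero => exact fun v hv => .inl hv
  | succ i ih =>
    have stay : spread E S i ⊆ ball Λ S (τ (i + 1)) := ih.trans (ball_mono (hτ i.le_succ))
    rintro y (hy | ⟨x, hx, hxy⟩)
    · exact stay hy
    · rcases eq_or_ne x y with rfl | hne
      · exact stay hx
      · obtain ⟨l, hl, hτl, hlτ⟩ := hE i _ hxy (Sym2.mk_isDiag_iff.not.2 hne)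
        exact ball_mono hlτ (mem_ball_of_lt (ih hx) hl hτl)

/- Running the slots backwards from `U` explores vertices from which `U` is still reachable. -/
lemma inter_ball_nonempty_of_mem_spread_reverse (hτ : Monotone τ)
    (hE : ∀ i, ∀ e ∈ E i, ¬ e.IsDiag → ∃ l ∈ Λ e, l ∈ Set.Ioc (τ i) (τ (i + 1))) {U : Set V}
    {i m : ℕ} (him : i + m = M) {v : V} (hvU : v ∈ spread (fun j => E (M - 1 - j)) U i)
    (hvS : v ∈ ball Λ S (τ m)) : (U ∩ ball Λ S (τ M)).Nonempty := by
  induction i generalizing v m with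
  | zero => exact ⟨v, hvU, by rwa [← him, zero_add]⟩
  | succ i ih =>
    have ih_succ {x : V} := ih (m := m + 1) (v := x) (by omega)
    have stay : v ∈ ball Λ S (τ (m + 1)) := ball_mono (hτ m.le_succ) hvS
    rcases hvU with hvU | ⟨x, hx, hxv⟩
    · exact ih_succ hvU stay
    · rcases eq_or_ne x v with rfl | hne
      · exact ih_succ hx stay
      · have hm : M - 1 - i = m := by omega
        obtain ⟨l, hl, hτl, hlτ⟩ := hE m s(x, v) (hm ▸ hxv) (Sym2.mk_isDiag_iff.not.2 hne)
        exact ih_succ hx (ball_mono hlτ (mem_ball_of_lt hvS (Sym2.eq_swap ▸ hl) hτl))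

/- If the ball of a large set `S` missed too many vertices, the backward spread of the missed
vertices would meet `S`. -/
lemma two_mul_ncard_le_ncard_ball [Finite V] (hτ : Monotone τ)
    (hE : ∀ i, ∀ e ∈ E i, ¬ e.IsDiag → ∃ l ∈ Λ e, l ∈ Set.Ioc (τ i) (τ (i + 1)))
    (forward : Expands E M) (backward : Expands (fun i => E (M - 1 - i)) M) (hS : S.Nonempty)
    (hS2 : 2 * S.ncard ≤ Nat.card V) : 2 * S.ncard ≤ (ball Λ S (τ M)).ncard := by
  by_cases hS3 : 3 * S.ncard ≤ Nat.card V
  · have grown := forward S hS hS2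
    have := Set.ncard_le_ncard (spread_subset_ball (S := S) hτ hE M)
    omega
  by_contra! hlt
  have hcompl : Nat.card V - 2 * S.ncard + 1 ≤ (ball Λ S (τ M))ᶜ.ncard := by
    rw [Set.ncard_compl]
    omega
  obtain ⟨U, hU, hU_ncard⟩ := Set.exists_subset_card_eq hcompl
  have hS_pos : 0 < S.ncard := hS.ncard_pos
  have grown := backward U (Set.nonempty_of_ncard_ne_zero (by omega)) (by omega)
  obtain ⟨v, hvU, hvS⟩ : (spread (fun i => E (M - 1 - i)) U M ∩ S).Nonempty := by
    by_contra hdisj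
    have := Set.ncard_union_eq (Set.not_nonempty_iff_eq_empty.1 hdisj |>
      Set.disjoint_iff_inter_eq_empty.2)
    have := Set.ncard_le_card (spread (fun i => E (M - 1 - i)) U M ∪ S)
    omega
  obtain ⟨u, huU, hu⟩ := inter_ball_nonempty_of_mem_spread_reverse hτ hE (add_zero M) hvU
    (.inl hvS)
  exact hU huU hu

end Reachability

section OrderDiscretization

variable {V : Type*} [DecidableEq V] (ω : Sym2 V → LabelSpace)

lemma mem_toTGraph {e : Sym2 V} {l : ℝ} :
    l ∈ toTGraph ω e ↔ ¬ e.IsDiag ∧ ∃ i, (ω e).2 i = l := by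
  by_cases he : e.IsDiag <;> simp [toTGraph, he]

variable [Fintype V]

lemma rank_monotone : Monotone (rank ω) := fun _ _ hxy =>
  Finset.sum_le_sum fun _ _ => Set.ncard_le_ncard fun _ h => le_trans h hxy

lemma rank_lt_rank {e : Sym2 V} {x l : ℝ} (hl : l ∈ toTGraph ω e) (hx : x < l) :
    rank ω x < rank ω l := by
  obtain ⟨he, i, rfl⟩ := (mem_toTGraph ω).1 hl
  refine Finset.sum_lt_sum (fun _ _ => Set.ncard_le_ncard fun _ h => le_trans h hx.le)
    ⟨e, by simpa using he, Set.ncard_lt_ncard ?_⟩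
  exact ⟨fun _ h => le_trans h hx.le, fun h => hx.not_ge (h (le_refl ((ω e).2 i)))⟩

lemma ball_toTGraph_subset_ball_orderDisc (S : Set V) (t : ℝ) :
    ball (toTGraph ω) S t ⊆ ball (orderDisc ω) S (rank ω t) := by
  refine ball_subset_ball_of_strictMono_labels (φ := fun x => (rank ω x : ℝ))
    (fun x y hxy => Nat.cast_le.2 (rank_monotone ω hxy)) (fun e l hl => ?_)
    fun e l hl x hx => Nat.cast_lt.2 (rank_lt_rank ω hl hx)
  obtain ⟨he, i, rfl⟩ := (mem_toTGraph ω).1 hl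
  simp [orderDisc, he]

lemma doubleAll_orderDisc_le {τ : ℕ → ℝ} (hτ : Monotone τ) {M : ℕ}
    (forward : Expands (active (fun i => hits (Set.Ioc (τ i) (τ (i + 1)))) ω) M)
    (backward : Expands
      (active (fun i => hits (Set.Ioc (τ (M - 1 - i)) (τ (M - 1 - i + 1)))) ω) M) :
    doubleAll (orderDisc ω) ≤ ENNReal.ofReal (rank ω (τ M)) := by
  refine doubleAll_le_of_forall (Nat.cast_nonneg _) fun S hS hS2 =>
    (two_mul_ncard_le_ncard_ball (Λ := toTGraph ω) hτ ?_ forward backward hS hS2).trans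
      (Set.ncard_le_ncard (ball_toTGraph_subset_ball_orderDisc ω S _))
  rintro i e ⟨k, hk⟩ he
  exact ⟨_, (mem_toTGraph ω).2 ⟨he, k, rfl⟩, hk⟩

end OrderDiscretization

section RankTail

lemma mgf_pi_sum {ι Ω : Type*} [Fintype ι] [MeasurableSpace Ω] {ν : Measure Ω}
    [IsProbabilityMeasure ν] {f : Ω → ℝ} (hf : Measurable f) (C : Finset ι) (s : ℝ) :
    mgf (fun ω => ∑ i ∈ C, f (ω i)) (Measure.pi fun _ : ι => ν) s = mgf f ν s ^ C.card := by
  have indep : iIndepFun (fun i (ω : ι → Ω) => f (ω i)) (Measure.pi fun _ : ι => ν) :=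
    iIndepFun_pi fun _ => hf.aemeasurable
  have mgf_eval (i : ι) : mgf (fun ω => f (ω i)) (Measure.pi fun _ : ι => ν) s = mgf f ν s := by
    have eval_mp : MeasurePreserving (fun ω : ι → Ω => ω i) (Measure.pi fun _ => ν) ν :=
      measurePreserving_eval _ i
    rw [← eval_mp.map_eq, mgf_map eval_mp.aemeasurable
      (hf.const_mul s).exp.aestronglyMeasurable, eval_mp.map_eq]
    rfl
  have := indep.mgf_sum (fun i => hf.comp (measurable_pi_apply i)) C (t := s)
  simp_rw [mgf_eval, Finset.prod_const] at this
  rw [← this]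
  congr 1
  ext ω
  simp

lemma mgf_indicator_one {Ω : Type*} [MeasurableSpace Ω] {μ : Measure Ω} [IsProbabilityMeasure μ]
    {I : Set Ω} (hI : MeasurableSet I) (s : ℝ) :
    mgf (I.indicator 1) μ s = 1 + μ.real I * (Real.exp s - 1) := by
  have exp_indicator : (fun x => Real.exp (s * I.indicator 1 x)) =
      fun x => 1 + I.indicator (fun _ => Real.exp s - 1) x := by
    ext x
    by_cases hx : x ∈ I <;> simp [hx]
  rw [mgf, exp_indicator, integral_add (integrable_const _) ((integrable_const _).indicator hI),
    integral_indicator_const _ hI]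
  simp

/-- The number of labels of an edge that are at most `t`. -/
def labelCount (t : ℝ) (l : LabelSpace) : ℕ := Nat.card {i : Fin l.1 // l.2 i ≤ t}

lemma labelCount_mk (t : ℝ) {k : ℕ} (x : Fin k → ℝ) :
    (labelCount t ⟨k, x⟩ : ℝ) = ∑ i, (Set.Iic t).indicator 1 (x i) := by
  simp [labelCount, Nat.card_eq_fintype_card, Fintype.card_subtype, Set.indicator_apply]

lemma measurable_labelCount (t : ℝ) : Measurable fun l => (labelCount t l : ℝ) := by
  refine fun s hs => MeasurableSpace.measurableSet_iInf.2 fun k => ?_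
  have : Measurable fun x : Fin k → ℝ => (labelCount t ⟨k, x⟩ : ℝ) := by
    simp only [labelCount_mk]
    exact Finset.measurable_fun_sum _ fun i _ =>
      (measurable_one.indicator measurableSet_Iic).comp (measurable_pi_apply i)
  exact this hs

variable {ν : Measure ℝ} [IsProbabilityMeasure ν] (r : ℕ) (t s : ℝ)

lemma mgf_labelCount : mgf (fun l => (labelCount t l : ℝ)) (edgeMeasure ν (Measure.dirac r)) s =
    (1 + ν.real (Set.Iic t) * (Real.exp s - 1)) ^ r := by
  rw [edgeMeasure_dirac, mgf_map (measurable_sigma_mk r).aemeasurable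
    ((measurable_labelCount t).const_mul s).exp.aestronglyMeasurable]
  simp only [Function.comp_def, labelCount_mk]
  rw [mgf_pi_sum (measurable_one.indicator measurableSet_Iic), mgf_indicator_one measurableSet_Iic,
    Finset.card_univ, Fintype.card_fin]

variable (V : Type*) [Fintype V] [DecidableEq V]

instance : IsProbabilityMeasure (model V ν (Measure.dirac r)) := by
  unfold model
  infer_instance

lemma mgf_rank :
    mgf (fun ω : Sym2 V → LabelSpace => (rank ω t : ℝ)) (model V ν (Measure.dirac r)) s =
      (1 + ν.real (Set.Iic t) * (Real.exp s - 1)) ^ (r * (Fintype.card V).choose 2) := by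
  have rank_eq (ω : Sym2 V → LabelSpace) :
      (rank ω t : ℝ) = ∑ e : Sym2 V with ¬ e.IsDiag, (labelCount t (ω e) : ℝ) :=
    Nat.cast_sum _ _
  simp only [rank_eq, model]
  rw [mgf_pi_sum (measurable_labelCount t), mgf_labelCount, ← pow_mul, ← Fintype.card_subtype,
    Sym2.card_subtype_not_diag]

variable {V r t s}

lemma model_real_lt_rank_le {m X : ℝ} (hs0 : 0 ≤ s) (hs1 : s ≤ 1)
    (hm : r * (Fintype.card V).choose 2 * ν.real (Set.Iic t) ≤ m) :
    (model V ν (Measure.dirac r)).real {ω | X < rank ω t} ≤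
      Real.exp (-(s * (X - (1 + s) * m))) := by
  set p := ν.real (Set.Iic t)
  have hp : 0 ≤ p := measureReal_nonneg
  have hexp : 0 ≤ Real.exp s - 1 := sub_nonneg.2 (Real.one_le_exp hs0)
  have mgf_pos : 0 < (1 + p * (Real.exp s - 1)) ^ (r * (Fintype.card V).choose 2) := by positivity
  have integrable : Integrable (fun ω : Sym2 V → LabelSpace => Real.exp (s * rank ω t))
      (model V ν (Measure.dirac r)) :=
    .of_integral_ne_zero (by rw [← mgf, mgf_rank]; exact mgf_pos.ne')
  calc (model V ν (Measure.dirac r)).real {ω | X < rank ω t}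
      ≤ (model V ν (Measure.dirac r)).real {ω | X ≤ rank ω t} :=
        measureReal_mono fun ω hω => le_of_lt (α := ℝ) hω
    _ ≤ Real.exp (-s * X) * (1 + p * (Real.exp s - 1)) ^ (r * (Fintype.card V).choose 2) := by
        rw [← mgf_rank]
        exact measure_ge_le_exp_mul_mgf X hs0 integrable
    _ ≤ Real.exp (-s * X) * Real.exp (p * (s + s ^ 2)) ^ (r * (Fintype.card V).choose 2) := by
        gcongr
        calc 1 + p * (Real.exp s - 1) ≤ 1 + p * (s + s ^ 2) := by
              gcongr
              linarith [exp_le_one_add_add_sq (abs_le.2 ⟨by linarith, hs1⟩)]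
          _ ≤ Real.exp (p * (s + s ^ 2)) := by
              linarith [Real.add_one_le_exp (p * (s + s ^ 2))]
    _ = Real.exp (-s * X + r * (Fintype.card V).choose 2 * p * (s + s ^ 2)) := by
        rw [← Real.exp_nat_mul, ← Real.exp_add, Nat.cast_mul]
        ring_nf
    _ ≤ _ := by
        rw [Real.exp_le_exp]
        nlinarith [mul_le_mul_of_nonneg_right hm (by positivity : 0 ≤ s + s ^ 2)]

end RankTail

section FixedSize

variable {V : Type*} [Fintype V] [DecidableEq V] {r M : ℕ} {ε y h t X m s : ℝ}

lemma monotone_natCast_mul (hh : 0 ≤ h) : Monotone fun i : ℕ => i * h :=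
  Nat.mono_cast.mul_const hh

/-- The sample `ω` expands within `M` steps when step `i` uses the time slot of length `h` with
index `σ i`. -/
def ExpandsAlong (h : ℝ) (M : ℕ) (σ : ℕ → ℕ) (ω : Sym2 V → LabelSpace) : Prop :=
  Expands (active (fun i => hits (Set.Ioc (σ i * h) ((σ i + 1 : ℕ) * h))) ω) M

lemma doubleAll_orderDisc_le_of_expandsAlong (hh : 0 ≤ h) {ω : Sym2 V → LabelSpace}
    (forward : ExpandsAlong h M id ω) (backward : ExpandsAlong h M (fun i => M - 1 - i) ω) :
    doubleAll (orderDisc ω) ≤ ENNReal.ofReal (rank ω (M * h)) :=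
  doubleAll_orderDisc_le ω (monotone_natCast_mul hh) forward backward

lemma contModel_real_not_expandsAlong_le {σ : ℕ → ℕ} (hM : 0 < M) (hσ : Set.InjOn σ (Set.Iio M))
    (hσM : Set.MapsTo σ (Set.Iio M) (Set.Iio M)) (hh : 0 ≤ h) (hMh : M * h ≤ 1)
    (hκ : r * h * (Nat.card V : ℝ) ^ 2 ≤ ε) (hε0 : 0 < ε) (hε1 : ε < 1) (hy0 : 0 ≤ y)
    (hy : y ≤ 1 / 2)
    (hcount : CountingBound (Nat.card V) ε ((1 - ε) ^ 2 * (r * h * M)) y) :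
    (contModel V (Measure.dirac r)).real {ω | ¬ ExpandsAlong h M σ ω} ≤ 2 * y := by
  have hmono := monotone_natCast_mul hh
  have hdisj : (Set.Iio M).PairwiseDisjoint fun i => Set.Ioc (σ i * h) ((σ i + 1 : ℕ) * h) :=
    fun i hi j hj hij => hmono.pairwise_disjoint_on_Ioc_succ (hσ.ne hi hj hij)
  have slot_real (i : ℕ) (hi : i < M) :
      h ≤ unif01.real (Set.Ioc (σ i * h) ((σ i + 1 : ℕ) * h)) := by
    have hle : (σ i + 1 : ℕ) * h ≤ 1 := (hmono (Nat.succ_le_of_lt (hσM hi))).trans hMh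
    rw [unif01_real_Ioc (by positivity) (hmono (σ i).le_succ) hle]
    push_cast
    linarith
  have hh1 : h ≤ 1 := by
    simpa using (hmono (Nat.one_le_iff_ne_zero.2 hM.ne')).trans hMh
  refine measureReal_not_expands_le (q := (1 - h) ^ r)
    (fun i => measurableSet_hits measurableSet_Ioc)
    (avoidProbLE_hits r (fun i => measurableSet_Ioc) hdisj slot_real)
    (pow_nonneg (sub_nonneg.2 hh1) r) ?_ (by positivity) hκ hε0 hε1 hy0 hy hcount
  calc (1 - h) ^ r ≤ Real.exp (-h) ^ r :=
        pow_le_pow_left₀ (sub_nonneg.2 hh1) (Real.one_sub_le_exp_neg h) r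
    _ = Real.exp (-(r * h)) := by rw [← Real.exp_nat_mul, mul_neg]

lemma contModel_real_lt_doubleAll_orderDisc_le (ht0 : 0 ≤ t) (ht1 : t ≤ 1) (hε0 : 0 < ε)
    (hε1 : ε < 1) (hy0 : 0 ≤ y) (hy : y ≤ 1 / 2)
    (hcount : CountingBound (Nat.card V) ε ((1 - ε) ^ 2 * (r * t)) y)
    (hs0 : 0 ≤ s) (hs1 : s ≤ 1) (hm : r * (Fintype.card V).choose 2 * t ≤ m) :
    (contModel V (Measure.dirac r)).real {ω | ENNReal.ofReal X < doubleAll (orderDisc ω)} ≤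
      4 * y + Real.exp (-(s * (X - (1 + s) * m))) := by
  obtain ⟨M, hM⟩ := exists_nat_gt (r * t * (Nat.card V : ℝ) ^ 2 / ε)
  have hM0 : (0 : ℝ) < M := lt_of_le_of_lt (by positivity) hM
  set h := t / M
  have hh : 0 ≤ h := by positivity
  have hMh : M * h = t := mul_div_cancel₀ t hM0.ne'
  have hκ : r * h * (Nat.card V : ℝ) ^ 2 ≤ ε :=
    calc r * h * (Nat.card V : ℝ) ^ 2 = r * t * (Nat.card V : ℝ) ^ 2 / M := by ring
      _ ≤ ε := (div_le_comm₀ hM0 hε0).2 hM.le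
  have not_expandsAlong_le {σ : ℕ → ℕ} (hσ : Set.InjOn σ (Set.Iio M))
      (hσM : Set.MapsTo σ (Set.Iio M) (Set.Iio M)) :=
    contModel_real_not_expandsAlong_le (V := V) (Nat.cast_pos.1 hM0) hσ hσM hh
      (hMh.trans_le ht1) hκ hε0 hε1 hy0 hy (by rwa [mul_assoc (r : ℝ), mul_comm h, hMh])
  have forward := not_expandsAlong_le (σ := id) (Set.injOn_id _) (Set.mapsTo_id _)
  have backward := not_expandsAlong_le (σ := fun i => M - 1 - i)
    (fun i hi j hj hij => by grind) (fun i hi => by grind)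
  have tail : (contModel V (Measure.dirac r)).real {ω | X < rank ω t} ≤
      Real.exp (-(s * (X - (1 + s) * m))) :=
    model_real_lt_rank_le hs0 hs1 (by rwa [unif01_real_Iic ht0 ht1])
  have failure_subset : {ω : Sym2 V → LabelSpace | ENNReal.ofReal X < doubleAll (orderDisc ω)} ⊆
      {ω | ¬ ExpandsAlong h M id ω} ∪ {ω | ¬ ExpandsAlong h M (fun i => M - 1 - i) ω} ∪
        {ω | X < rank ω t} := by
    intro ω hω
    contrapose hω
    simp only [Set.mem_union, Set.mem_ofPred_eq, not_or, not_not, not_lt] at hω ⊢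
    obtain ⟨⟨hforward, hbackward⟩, hrank⟩ := hω
    exact (doubleAll_orderDisc_le_of_expandsAlong hh hforward hbackward).trans
      (ENNReal.ofReal_le_ofReal (hMh ▸ hrank))
  grw [measureReal_mono failure_subset (measure_ne_top _ _), measureReal_union_le,
    measureReal_union_le, forward, backward, tail]
  linarith

lemma contModel_real_mul_log_lt_doubleAll_orderDisc_le {γ : ℝ} (hr : 0 < r) (hγ : 0 < γ)
    (hγr : 2 * (1 + γ) * Real.log (Nat.card V) ≤ r * Nat.card V) (hε0 : 0 < ε) (hε1 : ε < 1)
    (hy0 : 0 ≤ y) (hy : y ≤ 1 / 2)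
    (hcount : CountingBound (Nat.card V) ε
      (2 * ((1 - ε) ^ 2 * (1 + γ)) * Real.log (Nat.card V) / Nat.card V) y) :
    (contModel V (Measure.dirac r)).real {ω | ENNReal.ofReal
      ((1 + 2 * γ) * Nat.card V * Real.log (Nat.card V)) < doubleAll (orderDisc ω)} ≤
      4 * y + Real.exp (-(γ ^ 2 / (4 * (1 + γ)) * (Nat.card V * Real.log (Nat.card V)))) := by
  set n : ℕ := Nat.card V
  set t : ℝ := 2 * (1 + γ) * Real.log n / (r * n)
  set s : ℝ := γ / (2 * (1 + γ))
  have hlog : 0 ≤ Real.log n := Real.log_natCast_nonneg n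
  have hrt : r * t = 2 * (1 + γ) * Real.log n / n := by
    simp only [t]
    rw [← mul_div_assoc, mul_div_mul_left _ _ (by positivity)]
  have hs1 : s ≤ 1 := div_le_one_of_le₀ (by linarith) (by linarith)
  have mean_le : r * (Fintype.card V).choose 2 * t ≤ (1 + γ) * n * Real.log n := by
    have choose_le : ((Fintype.card V).choose 2 : ℝ) ≤ n ^ 2 / 2 := by
      simpa [n] using Nat.choose_le_pow_div (α := ℝ) 2 (Fintype.card V)
    calc r * (Fintype.card V).choose 2 * t = r * t * (Fintype.card V).choose 2 := by ring
      _ ≤ 2 * (1 + γ) * Real.log n / n * (n ^ 2 / 2) := by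
          rw [hrt]
          gcongr
      _ = (1 + γ) * n * Real.log n := by
          rcases eq_or_ne (n : ℝ) 0 with h0 | h0
          · simp [h0]
          · field_simp
  have rate : (1 - ε) ^ 2 * (r * t) = 2 * ((1 - ε) ^ 2 * (1 + γ)) * Real.log n / n := by
    rw [hrt]
    ring
  have exponent : s * ((1 + 2 * γ) * n * Real.log n - (1 + s) * ((1 + γ) * n * Real.log n)) =
      γ ^ 2 / (4 * (1 + γ)) * (n * Real.log n) := by
    simp only [s]
    field_simp
    ring
  rw [← rate] at hcount
  rw [← exponent]
  exact contModel_real_lt_doubleAll_orderDisc_le (by positivity)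
    (div_le_one_of_le₀ hγr (by positivity)) hε0 hε1 hy0 hy hcount (by positivity) hs1 mean_le

end FixedSize

section Limits

lemma tendsto_measure_one_of_tendsto_measureReal_compl {ι : Type*} {l : Filter ι} {Ω : ι → Type*}
    [∀ i, MeasurableSpace (Ω i)] {μ : ∀ i, Measure (Ω i)} [∀ i, IsProbabilityMeasure (μ i)]
    {s : ∀ i, Set (Ω i)} (h : Tendsto (fun i => (μ i).real (s i)ᶜ) l (𝓝 0)) :
    Tendsto (fun i => μ i (s i)) l (𝓝 1) := by
  have compl : Tendsto (fun i => μ i (s i)ᶜ) l (𝓝 0) :=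
    (ENNReal.tendsto_toReal_iff (fun i => measure_ne_top _ _) ENNReal.zero_ne_top).1 h
  have one_sub : Tendsto (fun i => 1 - μ i (s i)ᶜ) l (𝓝 1) := by
    simpa using ENNReal.Tendsto.sub tendsto_const_nhds compl (.inl ENNReal.one_ne_top)
  refine tendsto_of_tendsto_of_tendsto_of_le_of_le one_sub tendsto_const_nhds (fun i => ?_)
    fun i => prob_le_one
  rw [tsub_le_iff_right, ← measure_univ (μ := μ i), ← Set.union_compl_self (s i)]
  exact measure_union_le _ _

lemma eventually_mul_log_natCast_le (C : ℝ) {c : ℝ} (hc : 0 < c) :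
    ∀ᶠ n : ℕ in atTop, C * Real.log n ≤ c * n := by
  have isLittleO := (Real.isLittleO_log_id_atTop.const_mul_left C).comp_tendsto
    (tendsto_natCast_atTop_atTop (R := ℝ))
  filter_upwards [isLittleO.bound hc] with n hn
  simpa using (le_abs_self _).trans hn

lemma tendsto_exp_neg_mul_mul_log {c : ℝ} (hc : 0 < c) :
    Tendsto (fun n : ℕ => Real.exp (-(c * (n * Real.log n)))) atTop (𝓝 0) :=
  Real.tendsto_exp_neg_atTop_nhds_zero.comp <| Tendsto.const_mul_atTop hc <|
    tendsto_natCast_atTop_atTop.atTop_mul_atTop₀ <|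
      Real.tendsto_log_atTop.comp tendsto_natCast_atTop_atTop

end Limits

/-- Upper bound for the doubling time of the order discretization of
`Γ_{[n]}(ψ)` with `ψ` degenerate at `r`: with high probability it is at most
`(1+β)·n·log n`. -/
theorem statement18 (r : ℕ) (hr : 0 < r) (β : ℝ) (hβ : 0 < β) :
    Tendsto (fun n : ℕ =>
        contModel (Fin n) (Measure.dirac r) {ω |
          doubleAll (orderDisc ω) ≤ ENNReal.ofReal ((1 + β) * n * Real.log n)})
      atTop (𝓝 1) := by
  set γ : ℝ := β / 2
  set ε : ℝ := γ / (4 * (1 + γ))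
  have hγ : 0 < γ := half_pos hβ
  have hε0 : 0 < ε := by positivity
  have hε1 : ε < 1 := (div_lt_one (by positivity)).2 (by linarith)
  have hA : 1 < (1 - ε) ^ 2 * (1 + γ) := by
    have : ε * (1 + γ) = γ / 4 := by simp only [ε]; field_simp
    nlinarith [mul_pos hε0 hε0]
  obtain ⟨y, hy0, hy, hcount⟩ := exists_tendsto_zero_countingBound hε0 hε1 hA
  refine tendsto_measure_one_of_tendsto_measureReal_compl ?_
  refine squeeze_zero' (.of_forall fun n => measureReal_nonneg) ?_ (by
    simpa using (hy.const_mul 4).add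
      (tendsto_exp_neg_mul_mul_log (c := γ ^ 2 / (4 * (1 + γ))) (by positivity)))
  filter_upwards [eventually_mul_log_natCast_le (2 * (1 + γ)) (Nat.cast_pos.2 hr : (0 : ℝ) < r),
    hy.eventually_le_const (by norm_num : (0 : ℝ) < 1 / 2)] with n hlog hy2
  have failure := contModel_real_mul_log_lt_doubleAll_orderDisc_le (V := Fin n) hr hγ
    (by simpa using hlog) hε0 hε1 (hy0 n) hy2 (by simpa using hcount n)
  simpa [Set.compl_ofPred, show 1 + 2 * γ = 1 + β by ring] using failure

end RTG
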